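/- For every block subspace Y of X_iw and every C > 1 there exist an infinite block sequence (x_i)_{i∈ℕ} in Y and a strictly increasing sequence (j_i)_{i∈ℕ} of naturals such that (x_i)_i is a (C,(j_i)_i)-rapidly increasing sequence with ‖x_i‖ ≥ 1 for all i ∈ ℕ. -/

import Mathlib

/-!
The vectors of the rapidly increasing sequence are multiples of special convex combinations of
normalized blocks of `y`; three facts make them work.

*Lower estimate* (`exists_lowerEst`). Some subsequence `z` of `y` satisfies
`‖∑ aᵢ zᵢ‖ ≥ (∑ aᵢ) / (4 m_j)` for nonnegative coefficients on `𝓢_{n_j}`-admissible index sets, for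
every `j`. Take functionals almost norming the `yᵢ`. If their weights tend to infinity along the
sequence, a subsequence of them is very fast growing and can be combined with weight `m_j`. If not,
infinitely many share one weight `w` and one admissibility `p`; the sequences they are built from,
with the first term of each removed, together form an `𝓢_{n_j + p}`-admissible very fast growing
sequence, which is combined with weight `m_j w`. Removing one term costs at most `1 / w ≤ 1 / 2`.

*James' argument* (`exists_spec_norm_ge`). For `θ < 1` some `(n, ε)` special convex combination of
normalized blocks of `z` has norm at least `θ`. Otherwise, starting from `z` and repeatedly passing
to normalized special convex combinations, `k` steps give a normalized combination of the `zᵢ`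
over an `𝓢_{nk}`-set with coefficients of sum at least `θ⁻ᵏ`. With `k = ⌊n_j / n⌋` the lower
estimate yields `θ⁻ᵏ ≤ 4 m_j`, which is false for some `j` since `(θ^{-1/n})^{n_j} / m_j → ∞`.

*Small weights* (`Decomp.abs_eval_spec_le`). If `f` has weight `v < m_{j+1}`, the growth condition
on `(n_j)` shows that `f` is built from an `𝓢ₚ`-admissible sequence with `p + 1 < n_{j+1}`. In an
`(n_{j+1}, ε)` special convex combination of normalized blocks, the blocks in whose range a term
of this sequence starts have total coefficient at most `ε`, and any other block meets at most one
term and so contributes with factor at most `1 / v`. Hence `|f| ≤ 1 / v + ε` on the combination.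

Admissibility is handled through `Sch t n I`, a version of the Schreier families for finite sets `I`
of indices carrying a numerical value `t`.
-/

open Filter Topology
open scoped ENNReal

noncomputable section

/-! ### Abstract Banach space notions -/

section Abstract

variable {X : Type*} [NormedAddCommGroup X] [NormedSpace ℝ X]

/-- A sequence is normalized if every term has norm one. -/
def Normalized (x : ℕ → X) : Prop := ∀ i, ‖x i‖ = 1

/-- A sequence is weakly null if it tends to `0` in the weak topology. -/
def WeaklyNull (x : ℕ → X) : Prop :=
  ∀ f : X →L[ℝ] ℝ, Tendsto (fun i => f (x i)) atTop (𝓝 (0 : ℝ))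

end Abstract

/-- The ℓ₁ norm of finite coefficient vectors (the norms of finite linear
combinations of the unit vector basis of ℓ₁). -/
def l1Norm : ∀ m : ℕ, (Fin m → ℝ) → ℝ := fun _ a => ∑ i, |a i|

/-- The sup norm of finite coefficient vectors (the norms of finite linear
combinations of the unit vector basis of c₀). -/
def supNorm : ∀ m : ℕ, (Fin m → ℝ) → ℝ := fun _ a => ⨆ i, |a i|

/-- The ℓ_p norm of finite coefficient vectors, `1 ≤ p < ∞`. -/
def lpNormFin (p : ℝ) : ∀ m : ℕ, (Fin m → ℝ) → ℝ := fun _ a => (∑ i, |a i| ^ p) ^ (1 / p)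

/-- The ℓ_q norms of finite coefficient vectors, `q ∈ [1,∞]`, where `q = ∞`
corresponds to `c₀`. -/
def finLqNorm (q : ℝ≥0∞) : ∀ m : ℕ, (Fin m → ℝ) → ℝ := fun m a =>
  if q = ⊤ then supNorm m a else lpNormFin q.toReal m a

/-- The family of seminorms `ν` (of finite combinations of a sequence in a seminormed
space) is `C`-equivalent to the family `μ`:  there are `A B > 0` with `A * B ≤ C` and
`(1/A) * μ ≤ ν ≤ B * μ`. -/
def NormFamEquiv (C : ℝ) (μ ν : ∀ m : ℕ, (Fin m → ℝ) → ℝ) : Prop :=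
  ∃ A B : ℝ, 0 < A ∧ 0 < B ∧ A * B ≤ C ∧
    ∀ (m : ℕ) (a : Fin m → ℝ), (1 / A) * μ m a ≤ ν m a ∧ ν m a ≤ B * μ m a

section Abstract2

variable {X : Type*} [NormedAddCommGroup X] [NormedSpace ℝ X]

/-- The sequence `x` generates the spreading model whose finite-combination
seminorms are given by the family `ν`. -/
def GeneratesSpreadingModel (x : ℕ → X) (ν : ∀ m : ℕ, (Fin m → ℝ) → ℝ) : Prop :=
  ∀ (m : ℕ) (a : Fin m → ℝ), ∀ ε > (0 : ℝ), ∃ N : ℕ, ∀ j : Fin m → ℕ,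
    StrictMono j → (∀ i, N ≤ j i) → |‖∑ i, a i • x (j i)‖ - ν m a| < ε

/-- The array of sequences `A` (row `A i` is the `i`-th sequence) generates the
asymptotic model whose finite-combination seminorms are given by `ν`. -/
def GeneratesAsymptoticModel (A : ℕ → ℕ → X) (ν : ∀ l : ℕ, (Fin l → ℝ) → ℝ) : Prop :=
  ∀ (l : ℕ) (a : Fin l → ℝ), ∀ ε > (0 : ℝ), ∃ N : ℕ, ∀ j : Fin l → ℕ,
    StrictMono j → (∀ i, N ≤ j i) → |‖∑ i, a i • A i (j i)‖ - ν l a| < ε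

/-- `e` is a Schauder basis of `X`. -/
def IsSchauderBasis (e : ℕ → X) : Prop :=
  ∀ x : X, ∃! a : ℕ → ℝ,
    Tendsto (fun n => ∑ i ∈ Finset.range n, a i • e i) atTop (𝓝 x)

/-- The basis `e` is 1-unconditional. -/
def OneUnconditional (e : ℕ → X) : Prop :=
  ∀ (F : Finset ℕ) (a ε : ℕ → ℝ), (∀ i, ε i = 1 ∨ ε i = -1) →
    ‖∑ i ∈ F, (ε i * a i) • e i‖ = ‖∑ i ∈ F, a i • e i‖

/-- `x` is a block sequence with respect to the basis `e`. -/
def IsBlockSeq (e : ℕ → X) (x : ℕ → X) : Prop :=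
  ∃ F : ℕ → Finset ℕ, (∀ k, (F k).Nonempty) ∧
    (∀ k l : ℕ, k < l → ∀ i ∈ F k, ∀ j ∈ F l, i < j) ∧
    ∀ k, x k ≠ 0 ∧ x k ∈ Submodule.span ℝ (e '' ↑(F k))

/-- `z` is a finite block sequence with respect to the basis `e`. -/
def IsFinBlockSeq (e : ℕ → X) {n : ℕ} (z : Fin n → X) : Prop :=
  ∃ F : Fin n → Finset ℕ, (∀ k, (F k).Nonempty) ∧
    (∀ k l : Fin n, k < l → ∀ i ∈ F k, ∀ j ∈ F l, i < j) ∧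
    ∀ k, z k ≠ 0 ∧ z k ∈ Submodule.span ℝ (e '' ↑(F k))

/-- `Y` is a block subspace of `X` (with respect to the basis `e`): the closed
linear span of an infinite normalized block sequence. -/
def IsBlockSubspace (e : ℕ → X) (Y : Set X) : Prop :=
  ∃ y : ℕ → X, IsBlockSeq e y ∧ Normalized y ∧
    Y = closure (↑(Submodule.span ℝ (Set.range y)) : Set X)

/-- The finite sequence `z` is `C`-equivalent to a finite basic sequence whose
finite-combination norms are given by `μ`. -/
def FinSeqEquiv (C : ℝ) {n : ℕ} (μ : (Fin n → ℝ) → ℝ) (z : Fin n → X) : Prop :=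
  ∃ A B : ℝ, 0 < A ∧ 0 < B ∧ A * B ≤ C ∧
    ∀ a : Fin n → ℝ, (1 / A) * μ a ≤ ‖∑ i, a i • z i‖ ∧ ‖∑ i, a i • z i‖ ≤ B * μ a

/-- The finite basic sequence with combination norms `μ` is block representable
in `Y ⊆ X`. -/
def BlockRepresentableIn (e : ℕ → X) (Y : Set X) {n : ℕ} (μ : (Fin n → ℝ) → ℝ) : Prop :=
  ∀ ε > (0 : ℝ), ∃ z : Fin n → X, (∀ i, z i ∈ Y) ∧ IsFinBlockSeq e z ∧
    FinSeqEquiv (1 + ε) μ z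

/-- `x` is a (Schauder) basic sequence. -/
def IsBasicSeq (x : ℕ → X) : Prop :=
  (∀ i, x i ≠ 0) ∧ ∃ K : ℝ, 0 < K ∧ ∀ (a : ℕ → ℝ) (m n : ℕ), m ≤ n →
    ‖∑ i ∈ Finset.range m, a i • x i‖ ≤ K * ‖∑ i ∈ Finset.range n, a i • x i‖

end Abstract2

/-- A plegma of `k` strictly increasing `l`-tuples of naturals. -/
def IsPlegma (k l : ℕ) (s : Fin k → Fin l → ℕ) : Prop :=
  (∀ i, StrictMono (s i)) ∧
  (∀ i₁ i₂ : Fin k, ∀ j₁ j₂ : Fin l, j₁ < j₂ → s i₁ j₁ < s i₂ j₂) ∧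
  (∀ i₁ i₂ : Fin k, i₁ < i₂ → ∀ j, s i₁ j ≤ s i₂ j)

/-- A strict plegma: a plegma with pairwise disjoint tuples. -/
def IsStrictPlegma (k l : ℕ) (s : Fin k → Fin l → ℕ) : Prop :=
  IsPlegma k l s ∧ ∀ i₁ i₂ : Fin k, i₁ ≠ i₂ → ∀ j₁ j₂ : Fin l, s i₁ j₁ ≠ s i₂ j₂

section Abstract3

variable {X : Type*} [NormedAddCommGroup X] [NormedSpace ℝ X]

/-- The `l`-array `x` generates the joint spreading model with finite-combination
seminorms `ν`. -/
def GeneratesJSM (l : ℕ) (x : Fin l → ℕ → X)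
    (ν : ∀ k : ℕ, (Fin l → Fin k → ℝ) → ℝ) : Prop :=
  ∀ (k : ℕ) (a : Fin l → Fin k → ℝ), ∀ ε > (0 : ℝ), ∃ N : ℕ,
    ∀ s : Fin l → Fin k → ℕ, IsStrictPlegma l k s → (∀ i j, N ≤ s i j) →
      |‖∑ i, ∑ j, a i j • x i (s i j)‖ - ν k a| < ε

/-- `X` admits a unique joint spreading model with respect to the family of
sequences `F`. -/
def UniqueJSM (F : Set (ℕ → X)) : Prop :=
  ∃ C : ℝ, 1 ≤ C ∧ ∀ (l : ℕ) (x y : Fin l → ℕ → X),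
    (∀ i, x i ∈ F) → (∀ i, y i ∈ F) →
    ∀ ν μ, GeneratesJSM l x ν → GeneratesJSM l y μ →
      ∃ A B : ℝ, 0 < A ∧ 0 < B ∧ A * B ≤ C ∧
        ∀ (k : ℕ) (a : Fin l → Fin k → ℝ),
          (1 / A) * μ k a ≤ ν k a ∧ ν k a ≤ B * μ k a

/-- `X` admits a unique asymptotic model with respect to the family of
sequences `F`. -/
def UniqueAM (F : Set (ℕ → X)) : Prop :=
  ∀ x y : ℕ → ℕ → X, (∀ i, x i ∈ F) → (∀ i, y i ∈ F) →
    ∀ ν μ, GeneratesAsymptoticModel x ν → GeneratesAsymptoticModel y μ →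
      ∃ C : ℝ, 1 ≤ C ∧ NormFamEquiv C μ ν

end Abstract3

/-- A bundled Banach-space candidate. -/
structure BanachPkg : Type 1 where
  X : Type
  [grp : NormedAddCommGroup X]
  [mod : NormedSpace ℝ X]

attribute [instance] BanachPkg.grp BanachPkg.mod

/-! ### c₀₀ and the norming sets -/

/-- The finitely supported real sequences. -/
abbrev c00 : Type := ℕ →₀ ℝ

/-- Minimum of the support (0 for the zero vector). -/
def minSupp (x : c00) : ℕ := if h : x.support.Nonempty then x.support.min' h else 0

/-- Maximum of the support (0 for the zero vector). -/
def maxSupp (x : c00) : ℕ := if h : x.support.Nonempty then x.support.max' h else 0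

/-- Minimum of a finset of naturals (0 if empty). -/
def finsetMin (F : Finset ℕ) : ℕ := if h : F.Nonempty then F.min' h else 0

/-- `x < y` as successive (block) vectors. -/
def Blocks (x y : c00) : Prop := maxSupp x < minSupp y

/-- The Schreier families. -/
def Schreier : ℕ → Set (Finset ℕ)
  | 0 => {F | ∃ i : ℕ, F = {i}}
  | n + 1 => {F | ∃ (d : ℕ) (G : Fin d → Finset ℕ),
      (∀ k, G k ∈ Schreier n) ∧
      (∀ k l : Fin d, k < l → ∀ i ∈ G k, ∀ j ∈ G l, i < j) ∧
      (∀ i ∈ F, d ≤ i) ∧ F = Finset.univ.biUnion G}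

/-- The family `A_m` of sets of cardinality at most `m`. -/
def SchreierA (m : ℕ) : Set (Finset ℕ) := {F | F.card ≤ m}

/-- The operation `A * B` on families of finite sets. -/
def famStar (A B : Set (Finset ℕ)) : Set (Finset ℕ) :=
  {F | ∃ (d : ℕ) (G : Fin d → Finset ℕ),
      (∀ k, G k ∈ B) ∧ (∀ k, (G k).Nonempty) ∧
      (∀ k l : Fin d, k < l → ∀ i ∈ G k, ∀ j ∈ G l, i < j) ∧
      (Finset.univ.image fun k => finsetMin (G k)) ∈ A ∧ F = Finset.univ.biUnion G}

/-- A finite block sequence in `c00` is `S`-admissible. -/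
def Admissible (S : Set (Finset ℕ)) {d : ℕ} (f : Fin d → c00) : Prop :=
  (∀ q, (f q).support.Nonempty) ∧
  (∀ q r : Fin d, q < r → Blocks (f q) (f r)) ∧
  (Finset.univ.image fun q => minSupp (f q)) ∈ S

/-- The two fixed sequences `(m_j)`, `(n_j)` (indexed here starting at `0`, so that
`m 0` plays the role of `m_1` etc.) together with their growth conditions. -/
structure IWParams where
  m : ℕ → ℕ
  n : ℕ → ℕ
  m_mono : StrictMono m
  n_mono : StrictMono n
  m_first : m 0 = 2
  n_first : n 0 = 1
  growth_exp : ∀ C : ℝ, 1 < C → Tendsto (fun j => C ^ (n j) / (m j : ℝ)) atTop atTop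
  growth_ratio : Tendsto (fun j => (m j : ℝ) / (m (j + 1) : ℝ)) atTop (𝓝 0)
  growth_sum : ∀ (l : ℕ) (js : Fin l → ℕ) (j : ℕ), (∀ i, js i ≤ j) →
    (∏ i, m (js i)) < m (j + 1) ^ 2 → (∑ i, n (js i)) + 1 < n (j + 1)

/-- The action of a functional `f ∈ c00` on a vector `x ∈ c00`. -/
def evalPair (f x : c00) : ℝ := f.sum fun i a => a * x i

/-- The norming set `W_iw`, together with admissible weights: `WIW P f w` means
that `f` belongs to the norming set and `w` is a weight of (one representation of)
`f`; the unit functionals `±e_i^*` have weight `∞`. -/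
inductive WIW (P : IWParams) : c00 → ℕ∞ → Prop
  | unit (i : ℕ) (s : ℝ) (hs : s = 1 ∨ s = -1) : WIW P (Finsupp.single i s) ⊤
  | op (l : ℕ) (hl : 0 < l) (js : Fin l → ℕ) (d : ℕ) (f : Fin d → c00) (w : Fin d → ℕ∞)
      (hf : ∀ q, WIW P (f q) (w q))
      (hadm : Admissible (Schreier (∑ i, P.n (js i))) f)
      (hvfg : ∀ q r : Fin d, (q : ℕ) + 1 = (r : ℕ) → (maxSupp (f q) : ℕ∞) < w r) :
      WIW P (((∏ i, P.m (js i) : ℕ) : ℝ)⁻¹ • ∑ q, f q) ((∏ i, P.m (js i) : ℕ) : ℕ∞)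

/-- Membership in the norming set `W_iw`. -/
def memWIW (P : IWParams) (f : c00) : Prop := ∃ w, WIW P f w

/-- The norm of `X_iw`, on finitely supported vectors. -/
def iwNorm (P : IWParams) (x : c00) : ℝ :=
  sSup {r | ∃ f, memWIW P f ∧ r = evalPair f x}

/-- The dual norm of a finitely supported functional, as an element of `X_iw^*`. -/
def iwDualNorm (P : IWParams) (f : c00) : ℝ :=
  sSup {r | ∃ x : c00, iwNorm P x ≤ 1 ∧ r = evalPair f x}

/-- The auxiliary norming set `W_aux^N` together with admissible weights. -/
inductive WAux (P : IWParams) (N : ℕ) : c00 → ℕ∞ → Prop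
  | unit (i : ℕ) (s : ℝ) (hs : s = 1 ∨ s = -1) : WAux P N (Finsupp.single i s) ⊤
  | op (l : ℕ) (hl : 0 < l) (js : Fin l → ℕ) (d : ℕ) (f : Fin d → c00) (w : Fin d → ℕ∞)
      (hf : ∀ q, WAux P N (f q) (w q))
      (hadm : Admissible (famStar (Schreier (∑ i, P.n (js i))) (SchreierA 3)) f)
      (hlarge : ∀ q : Fin d, 0 < (q : ℕ) → (N : ℕ∞) < w q) :
      WAux P N (((∏ i, P.m (js i) : ℕ) : ℝ)⁻¹ • ∑ q, f q) ((∏ i, P.m (js i) : ℕ) : ℕ∞)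

/-- An `(n, ε)` basic special convex combination. -/
def IsBasicSCC (n : ℕ) (ε : ℝ) (x : c00) : Prop :=
  ∃ F : Finset ℕ, x.support ⊆ F ∧ F ∈ Schreier n ∧ (∀ i, 0 ≤ x i) ∧
    (∑ i ∈ F, x i) = 1 ∧ ∀ G ⊆ F, G ∈ Schreier (n - 1) → (∑ i ∈ G, x i) < ε

/-- An `(n, ε)` special convex combination `∑ c i • x i`. -/
def IsSCC (n : ℕ) (ε : ℝ) {m : ℕ} (c : Fin m → ℝ) (x : Fin m → c00) : Prop :=
  (∀ i, (x i).support.Nonempty) ∧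
  (∀ i j : Fin m, i < j → Blocks (x i) (x j)) ∧
  IsBasicSCC n ε (∑ i, c i • Finsupp.single (minSupp (x i)) (1 : ℝ))

/-- `x` generates, with respect to the norm function `Nrm` on `c00`, the spreading
model whose finite-combination seminorms are `ν`. -/
def GeneratesSMwith (Nrm : c00 → ℝ) (x : ℕ → c00) (ν : ∀ m : ℕ, (Fin m → ℝ) → ℝ) : Prop :=
  ∀ (m : ℕ) (a : Fin m → ℝ), ∀ ε > (0 : ℝ), ∃ N : ℕ, ∀ j : Fin m → ℕ,
    StrictMono j → (∀ i, N ≤ j i) → |Nrm (∑ i, a i • x (j i)) - ν m a| < ε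

/-- The array `A` generates, with respect to the norm function `Nrm` on `c00`, the
asymptotic model whose finite-combination seminorms are `ν`. -/
def GeneratesAMwith (Nrm : c00 → ℝ) (A : ℕ → ℕ → c00) (ν : ∀ l : ℕ, (Fin l → ℝ) → ℝ) : Prop :=
  ∀ (l : ℕ) (a : Fin l → ℝ), ∀ ε > (0 : ℝ), ∃ N : ℕ, ∀ j : Fin l → ℕ,
    StrictMono j → (∀ i, N ≤ j i) → |Nrm (∑ i, a i • A i (j i)) - ν l a| < ε

/-- A normalized block sequence in `c00` with respect to a norm function. -/
def IsNormBlockSeq (Nrm : c00 → ℝ) (y : ℕ → c00) : Prop :=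
  (∀ k, (y k).support.Nonempty) ∧ (∀ k, Blocks (y k) (y (k + 1))) ∧ ∀ k, Nrm (y k) = 1

/-- A `(C, (j_i)_{i ∈ I})` rapidly increasing sequence, `I` a (finite) interval. -/
def IsRIS (P : IWParams) (C : ℝ) (I : Finset ℕ) (j : ℕ → ℕ) (x : ℕ → c00) : Prop :=
  (∀ a ∈ I, ∀ b ∈ I, ∀ c : ℕ, a ≤ c → c ≤ b → c ∈ I) ∧
  (∀ a ∈ I, ∀ b ∈ I, a < b → j a < j b) ∧
  (∀ i ∈ I, (x i).support.Nonempty) ∧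
  (∀ a ∈ I, ∀ b ∈ I, a < b → Blocks (x a) (x b)) ∧
  (∀ i ∈ I, iwNorm P (x i) ≤ C) ∧
  (∀ i ∈ I, ∀ i' ∈ I, i' + 1 = i → (maxSupp (x i') : ℝ) < Real.sqrt (P.m (j i))) ∧
  (∀ i ∈ I, ∀ f w, WIW P f w → w < ((P.m (j i) : ℕ) : ℕ∞) →
    |evalPair f (x i)| ≤ C / (w.toNat : ℝ))

/-- An infinite `(C, (j_i)_i)` rapidly increasing sequence. -/
def IsRISNat (P : IWParams) (C : ℝ) (j : ℕ → ℕ) (x : ℕ → c00) : Prop :=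
  StrictMono j ∧ (∀ i, (x i).support.Nonempty) ∧ (∀ i, Blocks (x i) (x (i + 1))) ∧
  (∀ i, iwNorm P (x i) ≤ C) ∧
  (∀ i, (maxSupp (x i) : ℝ) < Real.sqrt (P.m (j (i + 1)))) ∧
  (∀ i, ∀ f w, WIW P f w → w < ((P.m (j i) : ℕ) : ℕ∞) →
    |evalPair f (x i)| ≤ C / (w.toNat : ℝ))

/-- `X` together with the basis `e` is a realization of the space `X_iw`: a Banach
space in which `c00` sits isometrically (w.r.t. `iwNorm`) and densely. -/
structure IsIWRealization (P : IWParams) (X : Type*) [NormedAddCommGroup X]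
    [NormedSpace ℝ X] (e : ℕ → X) : Prop where
  complete : CompleteSpace X
  dense : DenseRange fun a : c00 => ∑ i ∈ a.support, a i • e i
  norm_eq : ∀ a : c00, ‖∑ i ∈ a.support, a i • e i‖ = iwNorm P a

/-- The conjugate exponent of `p`. -/
def conjExp (p : ℝ) : ℝ := p / (p - 1)

/-- The norming set `W_iw^p` together with admissible weights. -/
inductive WIWp (P : IWParams) (p : ℝ) : c00 → ℕ∞ → Prop
  | unit (i : ℕ) (s : ℝ) (hs : s = 1 ∨ s = -1) : WIWp P p (Finsupp.single i s) ⊤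
  | op (l : ℕ) (hl : 0 < l) (js : Fin l → ℕ) (d : ℕ) (f : Fin d → c00) (w : Fin d → ℕ∞)
      (lam : Fin d → ℝ) (hlam : (∑ q, |lam q| ^ conjExp p) ≤ 1)
      (hf : ∀ q, WIWp P p (f q) (w q))
      (hadm : Admissible (Schreier (∑ i, P.n (js i))) f)
      (hvfg : ∀ q r : Fin d, (q : ℕ) + 1 = (r : ℕ) → (maxSupp (f q) : ℕ∞) < w r) :
      WIWp P p (((∏ i, P.m (js i) : ℕ) : ℝ)⁻¹ • ∑ q, lam q • f q)
        ((∏ i, P.m (js i) : ℕ) : ℕ∞)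

/-- The norm of `X_iw^p` on finitely supported vectors. -/
def iwpNorm (P : IWParams) (p : ℝ) (x : c00) : ℝ :=
  sSup {r | ∃ f, (∃ w, WIWp P p f w) ∧ r = evalPair f x}

/-- The norming set of the space `X̃_iw`, together with admissible weights. -/
inductive WT (P : IWParams) : c00 → ℕ∞ → Prop
  | unit (i : ℕ) (s : ℝ) (hs : s = 1 ∨ s = -1) : WT P (Finsupp.single i s) ⊤
  | op (j : ℕ) (d : ℕ) (f : Fin d → c00) (w : Fin d → ℕ∞)
      (hf : ∀ q, WT P (f q) (w q))
      (hadm : Admissible (Schreier (P.n j)) f)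
      (hvfg : ∀ q r : Fin d, (q : ℕ) + 1 = (r : ℕ) → (maxSupp (f q) : ℕ∞) < w r) :
      WT P ((P.m j : ℝ)⁻¹ • ∑ q, f q) ((P.m j : ℕ) : ℕ∞)

/-- The norm of `X̃_iw` on finitely supported vectors. -/
def tNorm (P : IWParams) (x : c00) : ℝ :=
  sSup {r | ∃ f, (∃ w, WT P f w) ∧ r = evalPair f x}

end

/-! ### Supports of finitely supported vectors -/

theorem minSupp_le {x : c00} {i : ℕ} (hi : i ∈ x.support) : minSupp x ≤ i := by
  have h : x.support.Nonempty := ⟨i, hi⟩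
  simp only [minSupp, h, dif_pos]
  exact Finset.min'_le _ _ hi

theorem le_maxSupp {x : c00} {i : ℕ} (hi : i ∈ x.support) : i ≤ maxSupp x := by
  have h : x.support.Nonempty := ⟨i, hi⟩
  simp only [maxSupp, h, dif_pos]
  exact Finset.le_max' _ _ hi

theorem minSupp_mem {x : c00} (h : x.support.Nonempty) : minSupp x ∈ x.support := by
  simp only [minSupp, h, dif_pos]
  exact Finset.min'_mem _ _

theorem maxSupp_mem {x : c00} (h : x.support.Nonempty) : maxSupp x ∈ x.support := by
  simp only [maxSupp, h, dif_pos]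
  exact Finset.max'_mem _ _

theorem minSupp_le_maxSupp (x : c00) : minSupp x ≤ maxSupp x := by
  by_cases h : x.support.Nonempty
  · exact le_maxSupp (minSupp_mem h)
  · simp [minSupp, maxSupp, h]

theorem minSupp_mono {x y : c00} (hx : x.support.Nonempty) (h : x.support ⊆ y.support) :
    minSupp y ≤ minSupp x := minSupp_le (h (minSupp_mem hx))

theorem maxSupp_mono {x y : c00} (hx : x.support.Nonempty) (h : x.support ⊆ y.support) :
    maxSupp x ≤ maxSupp y := le_maxSupp (h (maxSupp_mem hx))

/-! ### The pairing -/

theorem evalPair_add_left (f g x : c00) :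
    evalPair (f + g) x = evalPair f x + evalPair g x :=
  Finsupp.sum_add_index' (by simp) (by intros; ring)

theorem evalPair_smul_left (c : ℝ) (f x : c00) :
    evalPair (c • f) x = c * evalPair f x := by
  unfold evalPair
  rw [Finsupp.sum_smul_index (by simp), Finsupp.sum, Finsupp.sum, Finset.mul_sum]
  exact Finset.sum_congr rfl fun i _ => by ring

theorem evalPair_zero_left (x : c00) : evalPair 0 x = 0 := by simp [evalPair]

theorem evalPair_neg_left (f x : c00) : evalPair (-f) x = - evalPair f x := by
  have := evalPair_smul_left (-1) f x
  simpa using this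

theorem evalPair_sum_left {ι : Type*} (I : Finset ι) (f : ι → c00) (x : c00) :
    evalPair (∑ q ∈ I, f q) x = ∑ q ∈ I, evalPair (f q) x := by
  classical
  induction I using Finset.induction_on with
  | empty => simp [evalPair_zero_left]
  | insert a s ha ih => rw [Finset.sum_insert ha, Finset.sum_insert ha, evalPair_add_left, ih]

/-- The pairing with a fixed functional, as a linear form on `c00`. -/
noncomputable def evalLin (f : c00) : c00 →ₗ[ℝ] ℝ where
  toFun x := evalPair f x
  map_add' x y := by
    simp only [evalPair, Finsupp.sum, ← Finset.sum_add_distrib]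
    exact Finset.sum_congr rfl fun i _ => by simp; ring
  map_smul' c x := by
    simp only [evalPair, Finsupp.sum, smul_eq_mul, Finset.mul_sum, RingHom.id_apply]
    exact Finset.sum_congr rfl fun i _ => by simp; ring

theorem evalPair_smul_right (c : ℝ) (f x : c00) :
    evalPair f (c • x) = c * evalPair f x := (evalLin f).map_smul c x

theorem evalPair_lc (f : c00) (u : ℕ → c00) (c : ℕ →₀ ℝ) :
    evalPair f (Finsupp.linearCombination ℝ u c) = ∑ i ∈ c.support, c i * evalPair f (u i) := by
  have : evalPair f (Finsupp.linearCombination ℝ u c)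
      = evalLin f (Finsupp.linearCombination ℝ u c) := rfl
  rw [this, Finsupp.linearCombination_apply, Finsupp.sum, map_sum]
  exact Finset.sum_congr rfl fun i _ => by rw [map_smul]; rfl

theorem evalPair_single (i : ℕ) (s : ℝ) (x : c00) :
    evalPair (Finsupp.single i s) x = s * x i := by
  simp [evalPair]

theorem evalPair_eq_zero {f x : c00} (h : ∀ i ∈ f.support, i ∉ x.support) :
    evalPair f x = 0 := by
  refine Finset.sum_eq_zero fun i hi => ?_
  have := h i hi
  simp only [Finsupp.mem_support_iff, not_not] at this
  simp [this]

theorem exists_mem_of_evalPair_ne {f x : c00} (h : evalPair f x ≠ 0) :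
    ∃ i ∈ f.support, i ∈ x.support := by
  by_contra hc
  push Not at hc
  exact h (evalPair_eq_zero hc)

theorem evalPair_filter (E : Finset ℕ) (f x : c00) (hx : x.support ⊆ E) :
    evalPair (f.filter (· ∈ E)) x = evalPair f x := by
  unfold evalPair
  rw [Finsupp.sum, Finsupp.sum, Finsupp.support_filter, Finset.sum_filter]
  refine Finset.sum_congr rfl fun i _ => ?_
  by_cases hi : i ∈ E
  · simp [hi]
  · have : x i = 0 := by
      by_contra h
      exact hi (hx (Finsupp.mem_support_iff.2 h))
    simp [hi, this]

/-! ### Schreier families of indexed sets -/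

/-- `Sch t n I` says that the finite index set `I`, ordered through the function `t`, is
`𝓢ₙ`-admissible for the values of `t`. The decomposition of `I` into `d` successive pieces is
encoded by a colouring `g` of `I` that is monotone along `t`; unlike in `Schreier 0`, the empty
set is allowed on level `0`. -/
def Sch {ι : Type*} (t : ι → ℕ) : ℕ → Finset ι → Prop
  | 0, I => I.card ≤ 1
  | n + 1, I => ∃ (d : ℕ) (g : ι → ℕ),
      (∀ i ∈ I, ∀ j ∈ I, t i ≤ t j → g i ≤ g j) ∧ (∀ i ∈ I, g i < d ∧ d ≤ t i) ∧
      ∀ k, Sch t n (I.filter (g · = k))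

theorem Sch.subset {ι : Type*} {t : ι → ℕ} : ∀ {n : ℕ} {I J : Finset ι}, Sch t n I → J ⊆ I →
    Sch t n J
  | 0, _, _, h, hJ => (Finset.card_le_card hJ).trans h
  | _ + 1, _, _, ⟨d, g, h1, h2, h3⟩, hJ =>
    ⟨d, g, fun i hi j hj => h1 i (hJ hi) j (hJ hj), fun i hi => h2 i (hJ hi),
      fun k => (h3 k).subset (Finset.filter_subset_filter _ hJ)⟩

theorem Sch.empty {ι : Type*} {t : ι → ℕ} : ∀ {n : ℕ}, Sch t n ∅
  | 0 => by simp [Sch]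
  | n + 1 => ⟨0, fun _ => 0, by simp, by simp, fun k => by simpa using Sch.empty⟩

/-- Composition of Schreier families, in a form that also contains the spreading property
(fibres of cardinality at most one): a set that projects along `φ` onto a member of `𝓢ₙ`, with
values not below those of the image and with fibres in `𝓢ₘ`, belongs to `𝓢ₙ₊ₘ`. -/
theorem Sch.comp {ι κ : Type*} [DecidableEq κ] {t : ι → ℕ} {s : κ → ℕ} {m : ℕ} (φ : ι → κ) :
    ∀ {n : ℕ} {I : Finset ι} {B : Finset κ}, Sch s n B → (∀ i ∈ I, φ i ∈ B) →
      (∀ i ∈ I, s (φ i) ≤ t i) → (∀ i ∈ I, ∀ j ∈ I, t i ≤ t j → s (φ i) ≤ s (φ j)) →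
      (∀ b, Sch t m (I.filter (φ · = b))) → Sch t (m + n) I
  | 0, I, B, hB, hmap, _, _, hfib => by
    rcases I.eq_empty_or_nonempty with rfl | ⟨i, hi⟩
    · exact Sch.empty
    · refine (hfib (φ i)).subset fun j hj => Finset.mem_filter.2 ⟨hj, ?_⟩
      exact Finset.card_le_one.1 hB _ (hmap j hj) _ (hmap i hi)
  | n + 1, I, B, ⟨d, g, h1, h2, h3⟩, hmap, hle, hmono, hfib => by
    refine ⟨d, fun i => g (φ i), fun i hi j hj hij => h1 _ (hmap i hi) _ (hmap j hj)
      (hmono i hi j hj hij), fun i hi => ⟨(h2 _ (hmap i hi)).1,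
        (h2 _ (hmap i hi)).2.trans (hle i hi)⟩, fun k => ?_⟩
    refine Sch.comp φ (h3 k) (fun i hi => ?_) (fun i hi => ?_) (fun i hi j hj => ?_) (fun b => ?_)
    · rw [Finset.mem_filter] at hi ⊢
      exact ⟨hmap i hi.1, hi.2⟩
    · exact hle i (Finset.mem_filter.1 hi).1
    · exact hmono i (Finset.mem_filter.1 hi).1 j (Finset.mem_filter.1 hj).1
    · exact (hfib b).subset (Finset.filter_subset_filter _ (Finset.filter_subset _ _))

/-- Heredity and spreading. -/
theorem Sch.spread {ι κ : Type*} {t : ι → ℕ} {s : κ → ℕ} (φ : ι → κ)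
    {n : ℕ} {I : Finset ι} {B : Finset κ} (hB : Sch s n B) (hmap : ∀ i ∈ I, φ i ∈ B)
    (hle : ∀ i ∈ I, s (φ i) ≤ t i) (hmono : ∀ i ∈ I, ∀ j ∈ I, t i ≤ t j → s (φ i) ≤ s (φ j))
    (hinj : ∀ i ∈ I, ∀ j ∈ I, φ i = φ j → i = j) : Sch t n I := by
  classical
  have := Sch.comp (m := 0) φ hB hmap hle hmono (fun b => by
    refine Finset.card_le_one.2 fun i hi j hj => ?_
    rw [Finset.mem_filter] at hi hj
    exact hinj i hi.1 j hj.1 (hi.2.trans hj.2.symm))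
  simpa using this

theorem Sch.succ {ι : Type*} {t : ι → ℕ} {n : ℕ} {I : Finset ι} (h : Sch t n I)
    (ht : ∀ i ∈ I, 1 ≤ t i) : Sch t (n + 1) I :=
  ⟨1, fun _ => 0, fun _ _ _ _ _ => le_rfl, fun i hi => ⟨one_pos, ht i hi⟩,
    fun _ => h.subset (Finset.filter_subset _ _)⟩

theorem Sch.mono {ι : Type*} {t : ι → ℕ} {n m : ℕ} {I : Finset ι} (h : Sch t n I)
    (ht : ∀ i ∈ I, 1 ≤ t i) (hnm : n ≤ m) : Sch t m I := by
  induction hnm with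
  | refl => exact h
  | step _ ih => exact ih.succ ht

theorem Sch.of_schreier : ∀ {n : ℕ} {F : Finset ℕ}, F ∈ Schreier n → Sch id n F
  | 0, F, ⟨i, hi⟩ => by simp [Sch, hi]
  | n + 1, F, ⟨d, G, h1, h2, h3, h4⟩ => by
    classical
    have hex : ∀ i ∈ F, ∃ k, i ∈ G k := by
      intro i hi
      rw [h4] at hi
      simpa using hi
    choose! g hg using fun i (hi : i ∈ F) => show ∃ k : ℕ, ∃ h : k < d, i ∈ G ⟨k, h⟩ by
      obtain ⟨k, hk⟩ := hex i hi
      exact ⟨k, k.2, hk⟩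
    refine ⟨d, g, fun i hi j hj hij => ?_, fun i hi => ⟨(hg i hi).1, h3 i hi⟩, fun k => ?_⟩
    · obtain ⟨a, ha⟩ := hg i hi
      obtain ⟨b, hb⟩ := hg j hj
      by_contra hlt
      have := h2 ⟨g j, b⟩ ⟨g i, a⟩ (by simpa using hlt) _ hb _ ha
      simp only [id] at hij
      omega
    · by_cases hk : k < d
      · refine (Sch.of_schreier (h1 ⟨k, hk⟩)).subset fun i hi => ?_
        obtain ⟨hiF, rfl⟩ := Finset.mem_filter.1 hi
        exact (hg i hiF).2
      · have : F.filter (g · = k) = ∅ := by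
          refine Finset.filter_eq_empty_iff.2 fun i hi h => hk (h ▸ (hg i hi).1)
        rw [this]
        exact Sch.empty

/-- For a level that is positive, or a nonempty set, the indexed notion gives back the original
Schreier families. Empty pieces are discarded by enumerating the colours that occur. -/
theorem Sch.to_schreier {ι : Type*} {t : ι → ℕ} : ∀ {n : ℕ} {I : Finset ι}, Sch t n I →
    (∀ i ∈ I, ∀ j ∈ I, t i = t j → i = j) → (0 < n ∨ I.Nonempty) → I.image t ∈ Schreier n
  | 0, I, h, _, hI => by
    obtain ⟨i, rfl⟩ : ∃ i, I = {i} := Finset.card_eq_one.1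
      (le_antisymm h (Finset.card_pos.2 (by simpa using hI)))
    exact ⟨t i, by simp⟩
  | n + 1, I, ⟨d, g, h1, h2, h3⟩, hinj, _ => by
    classical
    set e := (I.image g).orderEmbOfFin rfl with he
    have hmem : ∀ k, e k ∈ I.image g := fun k => Finset.orderEmbOfFin_mem _ _ _
    refine ⟨(I.image g).card, fun k => (I.filter (g · = e k)).image t, fun k => ?_, ?_, ?_, ?_⟩
    · refine Sch.to_schreier (h3 _) (fun i hi j hj => hinj i (Finset.mem_filter.1 hi).1 j
        (Finset.mem_filter.1 hj).1) (Or.inr ?_)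
      obtain ⟨i, hi, hik⟩ := Finset.mem_image.1 (hmem k)
      exact ⟨i, Finset.mem_filter.2 ⟨hi, hik⟩⟩
    · intro k l hkl a ha b hb
      obtain ⟨i, hi, rfl⟩ := Finset.mem_image.1 ha
      obtain ⟨j, hj, rfl⟩ := Finset.mem_image.1 hb
      rw [Finset.mem_filter] at hi hj
      have hlt : e k < e l := e.strictMono hkl
      by_contra hc
      have := h1 j hj.1 i hi.1 (not_lt.1 hc)
      omega
    · intro a ha
      obtain ⟨i, hi, rfl⟩ := Finset.mem_image.1 ha
      refine le_trans ?_ (h2 i hi).2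
      have : I.image g ⊆ Finset.range d := by
        intro k hk
        obtain ⟨j, hj, rfl⟩ := Finset.mem_image.1 hk
        exact Finset.mem_range.2 (h2 j hj).1
      simpa using Finset.card_le_card this
    · ext a
      simp only [Finset.mem_image, Finset.mem_biUnion, Finset.mem_univ, true_and,
        Finset.mem_filter]
      constructor
      · rintro ⟨i, hi, rfl⟩
        have : g i ∈ Set.range e := by
          rw [he, Finset.range_orderEmbOfFin]
          exact_mod_cast Finset.mem_image_of_mem g hi
        obtain ⟨k, hk⟩ := this
        exact ⟨k, i, ⟨hi, hk.symm⟩, rfl⟩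
      · rintro ⟨k, i, ⟨hi, _⟩, rfl⟩
        exact ⟨i, hi, rfl⟩

/-! ### The norming set -/

theorem IWParams.two_le_m (P : IWParams) (j : ℕ) : 2 ≤ P.m j := by
  rw [← P.m_first]
  exact P.m_mono.monotone (Nat.zero_le j)

theorem IWParams.one_le_n (P : IWParams) (j : ℕ) : 1 ≤ P.n j := by
  rw [← P.n_first]
  exact P.n_mono.monotone (Nat.zero_le j)

theorem IWParams.two_pow_le_prod (P : IWParams) {l : ℕ} (js : Fin l → ℕ) :
    2 ^ l ≤ ∏ i, P.m (js i) := by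
  have := Finset.prod_le_prod' (s := Finset.univ) (f := fun _ : Fin l => 2)
    (g := fun i => P.m (js i)) (fun i _ => P.two_le_m (js i))
  simpa using this

theorem IWParams.two_le_prod (P : IWParams) {l : ℕ} (hl : 0 < l) (js : Fin l → ℕ) :
    2 ≤ ∏ i, P.m (js i) := by
  refine le_trans ?_ (P.two_pow_le_prod js)
  exact Nat.le_self_pow hl.ne' 2

theorem IWParams.m_le_prod (P : IWParams) {l : ℕ} (js : Fin l → ℕ) (i : Fin l) :
    P.m (js i) ≤ ∏ i, P.m (js i) :=
  Finset.single_le_prod' (f := fun i => P.m (js i))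
    (fun k _ => (by have := P.two_le_m (js k); omega)) (Finset.mem_univ i)

theorem IWParams.sum_n_pos (P : IWParams) {l : ℕ} (hl : 0 < l) (js : Fin l → ℕ) :
    0 < ∑ i, P.n (js i) := by
  refine Finset.sum_pos (fun i _ => P.one_le_n _) ?_
  exact ⟨⟨0, hl⟩, Finset.mem_univ _⟩

/-- A sum of vectors with pairwise disjoint supports extends each of its summands. -/
theorem sum_apply_of_mem {ι : Type*} {I : Finset ι} {f : ι → c00}
    (hdisj : ∀ q ∈ I, ∀ r ∈ I, q ≠ r → ∀ i ∈ (f q).support, i ∉ (f r).support)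
    {q : ι} (hq : q ∈ I) {i : ℕ} (hi : i ∈ (f q).support) : (∑ r ∈ I, f r) i = f q i := by
  rw [Finsupp.finsetSum_apply]
  refine Finset.sum_eq_single q (fun r hr hrq => ?_) (fun h => absurd hq h)
  by_contra hne
  exact hdisj q hq r hr hrq.symm i hi (Finsupp.mem_support_iff.2 hne)

theorem not_mem_of_blocks {x y : c00} (h : maxSupp x < minSupp y) :
    (∀ i ∈ x.support, i ∉ y.support) ∧ ∀ i ∈ y.support, i ∉ x.support := by
  constructor
  · intro i hi hi'
    have := le_maxSupp hi
    have := minSupp_le hi'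
    omega
  · intro i hi hi'
    have := le_maxSupp hi'
    have := minSupp_le hi
    omega

/-- A form of the operations generating the norming set in which the block sequence is indexed
by an arbitrary finite set, ordered by the minima of the supports. -/
theorem WIW.mk_indexed {P : IWParams} {ι : Type*} (I : Finset ι) (f : ι → c00) (w : ι → ℕ∞)
    {l : ℕ} (hl : 0 < l) (js : Fin l → ℕ)
    (hf : ∀ q ∈ I, WIW P (f q) (w q)) (hne : ∀ q ∈ I, (f q).support.Nonempty)
    (hinj : ∀ q ∈ I, ∀ r ∈ I, minSupp (f q) = minSupp (f r) → q = r)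
    (hblock : ∀ q ∈ I, ∀ r ∈ I, minSupp (f q) < minSupp (f r) →
      maxSupp (f q) < minSupp (f r) ∧ (maxSupp (f q) : ℕ∞) < w r)
    (hS : Sch (fun q => minSupp (f q)) (∑ i, P.n (js i)) I) :
    WIW P (((∏ i, P.m (js i) : ℕ) : ℝ)⁻¹ • ∑ q ∈ I, f q) ((∏ i, P.m (js i) : ℕ) : ℕ∞) := by
  classical
  set T := I.image fun q => minSupp (f q) with hT
  set e := T.orderEmbOfFin rfl with he
  have hmem : ∀ k, ∃ q ∈ I, minSupp (f q) = e k := fun k =>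
    Finset.mem_image.1 (Finset.orderEmbOfFin_mem T rfl k)
  choose σ hσI hσ using hmem
  have hsurj : ∀ q ∈ I, ∃ k, σ k = q := by
    intro q hq
    have : minSupp (f q) ∈ Set.range e := by
      rw [he, Finset.range_orderEmbOfFin]
      exact_mod_cast Finset.mem_image_of_mem _ hq
    obtain ⟨k, hk⟩ := this
    exact ⟨k, hinj _ (hσI k) _ hq ((hσ k).trans hk)⟩
  have hσinj : Function.Injective σ := by
    intro a b hab
    apply e.injective
    rw [← hσ, ← hσ, hab]
  have hlt : ∀ a b, a < b → minSupp (f (σ a)) < minSupp (f (σ b)) := by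
    intro a b hab
    rw [hσ, hσ]
    exact e.strictMono hab
  have hsum : ∑ q ∈ I, f q = ∑ k, f (σ k) := by
    symm
    refine Finset.sum_bij (fun k _ => σ k) (fun k _ => hσI k) (fun a _ b _ h => hσinj h)
      (fun q hq => ?_) (fun _ _ => rfl)
    obtain ⟨k, hk⟩ := hsurj q hq
    exact ⟨k, Finset.mem_univ _, hk⟩
  rw [hsum]
  refine WIW.op l hl js _ (fun k => f (σ k)) (fun k => w (σ k)) (fun k => hf _ (hσI k))
    ⟨fun k => hne _ (hσI k), fun a b hab => (hblock _ (hσI a) _ (hσI b) (hlt a b hab)).1, ?_⟩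
    (fun a b hab => (hblock _ (hσI a) _ (hσI b) (hlt a b (by
      rw [Fin.lt_def]; omega))).2)
  have himg : (Finset.univ.image fun k => minSupp (f (σ k))) = T := by
    ext a
    simp only [Finset.mem_image, Finset.mem_univ, true_and, hT]
    constructor
    · rintro ⟨k, rfl⟩
      exact ⟨σ k, hσI k, rfl⟩
    · rintro ⟨q, hq, rfl⟩
      obtain ⟨k, rfl⟩ := hsurj q hq
      exact ⟨k, rfl⟩
  rw [himg]
  exact hS.to_schreier hinj (Or.inl (P.sum_n_pos hl js))

/-- The data of a weighted functional `f = w⁻¹ ∑_{q < d} F q` of the norming set, with weight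
`w = ∏ m_{j_i}` and admissibility `p = ∑ n_{j_i}`; `W q` is a weight of `F q`. -/
structure Decomp (P : IWParams) (f : c00) (w p : ℕ) where
  /-- the number of factors of the weight -/
  l : ℕ
  hl : 0 < l
  /-- the indices of the factors of the weight -/
  js : Fin l → ℕ
  prod_eq : ∏ i, P.m (js i) = w
  sum_eq : ∑ i, P.n (js i) = p
  /-- the length of the block sequence -/
  d : ℕ
  /-- the block sequence -/
  F : ℕ → c00
  /-- weights of its terms -/
  W : ℕ → ℕ∞
  f_eq : f = ((w : ℕ) : ℝ)⁻¹ • ∑ q ∈ Finset.range d, F q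
  mem : ∀ q < d, WIW P (F q) (W q)
  ne : ∀ q < d, (F q).support.Nonempty
  block : ∀ q r, q < r → r < d → maxSupp (F q) < minSupp (F r)
  vfg : ∀ q r, q < r → r < d → (maxSupp (F q) : ℕ∞) < W r
  sch : Sch (fun q => minSupp (F q)) p (Finset.range d)

theorem adm_lt {S : Set (Finset ℕ)} {d : ℕ} {f : Fin d → c00} (h : Admissible S f)
    {q r : Fin d} (hqr : q < r) : maxSupp (f q) < minSupp (f r) := h.2.1 q r hqr

theorem adm_max_mono {S : Set (Finset ℕ)} {d : ℕ} {f : Fin d → c00} (h : Admissible S f)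
    {q r : Fin d} (hqr : q ≤ r) : maxSupp (f q) ≤ maxSupp (f r) := by
  rcases hqr.eq_or_lt with rfl | hlt
  · exact le_rfl
  · exact (adm_lt h hlt).le.trans (minSupp_le_maxSupp _)

theorem adm_inj {S : Set (Finset ℕ)} {d : ℕ} {f : Fin d → c00} (h : Admissible S f)
    {q r : Fin d} (hqr : minSupp (f q) ≤ minSupp (f r)) : q ≤ r := by
  by_contra hc
  have h1 := adm_lt h (not_le.1 hc)
  have h2 := minSupp_le_maxSupp (f r)
  omega

theorem adm_sch {n d : ℕ} {f : Fin d → c00} (h : Admissible (Schreier n) f) :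
    Sch (fun q => minSupp (f q)) n Finset.univ := by
  refine (Sch.of_schreier h.2.2).spread (fun q => minSupp (f q)) ?_ ?_ ?_ ?_
  · exact fun q hq => Finset.mem_image_of_mem _ hq
  · exact fun q _ => le_rfl
  · exact fun q _ r _ h => h
  · exact fun q _ r _ hqr => le_antisymm (adm_inj h hqr.le) (adm_inj h hqr.ge)

theorem adm_vfg {S : Set (Finset ℕ)} {d : ℕ} {f : Fin d → c00} (h : Admissible S f)
    {w : Fin d → ℕ∞}
    (hvfg : ∀ q r : Fin d, (q : ℕ) + 1 = (r : ℕ) → (maxSupp (f q) : ℕ∞) < w r)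
    {q r : Fin d} (hqr : q < r) : (maxSupp (f q) : ℕ∞) < w r := by
  rw [Fin.lt_def] at hqr
  have hr := r.2
  have h1 := hvfg ⟨r - 1, by omega⟩ r (by simp; omega)
  refine lt_of_le_of_lt ?_ h1
  exact_mod_cast adm_max_mono h (by rw [Fin.le_def]; simp; omega)

/-- A member of the norming set is a signed unit functional or is weighted. -/
theorem WIW.decomp {P : IWParams} {f : c00} {w : ℕ∞} (h : WIW P f w) :
    w = ⊤ ∨ ∃ (v p : ℕ), w = v ∧ Nonempty (Decomp P f v p) := by
  cases h with
  | unit i s hs => exact Or.inl rfl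
  | op l hl js d f w hf hadm hvfg =>
    refine Or.inr ⟨_, _, rfl, ⟨⟨l, hl, js, rfl, rfl, d,
      fun q => if h : q < d then f ⟨q, h⟩ else 0, fun q => if h : q < d then w ⟨q, h⟩ else 0,
      ?_, ?_, ?_, ?_, ?_, ?_⟩⟩⟩
    · congr 1
      rw [Finset.sum_range]
      simp
    · intro q hq
      simpa [hq] using hf ⟨q, hq⟩
    · intro q hq
      simpa [hq] using hadm.1 ⟨q, hq⟩
    · intro q r hqr hr
      have hq : q < d := hqr.trans hr
      simpa [hq, hr] using adm_lt hadm (q := ⟨q, hq⟩) (r := ⟨r, hr⟩) hqr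
    · intro q r hqr hr
      have hq : q < d := hqr.trans hr
      simpa [hq, hr] using adm_vfg hadm hvfg (q := ⟨q, hq⟩) (r := ⟨r, hr⟩) hqr
    · rcases Nat.eq_zero_or_pos d with rfl | hd
      · simpa using Sch.empty
      refine (adm_sch hadm).spread (fun q => if h : q < d then ⟨q, h⟩ else ⟨0, hd⟩)
        (by simp) ?_ ?_ ?_
      · intro q hq
        simp [Finset.mem_range.1 hq]
      · intro q hq r hr
        simp [Finset.mem_range.1 hq, Finset.mem_range.1 hr]
      · intro q hq r hr
        simp [Finset.mem_range.1 hq, Finset.mem_range.1 hr]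

namespace Decomp

variable {P : IWParams} {f : c00} {w p : ℕ}

theorem disj (D : Decomp P f w p) : ∀ q ∈ Finset.range D.d, ∀ r ∈ Finset.range D.d, q ≠ r →
    ∀ i ∈ (D.F q).support, i ∉ (D.F r).support := by
  intro q hq r hr hqr
  rw [Finset.mem_range] at hq hr
  rcases lt_or_gt_of_ne hqr with h | h
  · exact (not_mem_of_blocks (D.block q r h hr)).1
  · exact (not_mem_of_blocks (D.block r q h hq)).2

theorem two_le (D : Decomp P f w p) : 2 ≤ w := by
  rw [← D.prod_eq]
  exact P.two_le_prod D.hl D.js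

theorem support_subset (D : Decomp P f w p) {q : ℕ} (hq : q < D.d) :
    (D.F q).support ⊆ f.support := by
  intro i hi
  have h1 := sum_apply_of_mem D.disj (Finset.mem_range.2 hq) hi
  have hw : (w : ℝ) ≠ 0 := by
    have := D.two_le
    positivity
  rw [D.f_eq, Finsupp.mem_support_iff, Finsupp.smul_apply, h1]
  exact smul_ne_zero (inv_ne_zero hw) (Finsupp.mem_support_iff.1 hi)

theorem eval_eq (D : Decomp P f w p) (x : c00) :
    evalPair f x = (w : ℝ)⁻¹ * ∑ q ∈ Finset.range D.d, evalPair (D.F q) x := by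
  conv_lhs => rw [D.f_eq]
  rw [evalPair_smul_left, evalPair_sum_left]

end Decomp

theorem WIW.neg {P : IWParams} {f : c00} {w : ℕ∞} (h : WIW P f w) : WIW P (-f) w := by
  induction h with
  | unit i s hs =>
    rw [← Finsupp.single_neg]
    refine WIW.unit i (-s) ?_
    rcases hs with rfl | rfl <;> simp
  | op l hl js d f w hf hadm hvfg ih =>
    have := WIW.op l hl js d (fun q => -f q) w ih
      (by simpa [Admissible, Blocks, minSupp, maxSupp, Finsupp.support_neg] using hadm)
      (by simpa [maxSupp, Finsupp.support_neg] using hvfg)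
    simpa using this

theorem WIW.abs_le_one {P : IWParams} {f : c00} {w : ℕ∞} (h : WIW P f w) (i : ℕ) :
    |f i| ≤ 1 := by
  induction h with
  | unit k s hs =>
    rw [Finsupp.single_apply]
    split_ifs
    · rcases hs with rfl | rfl <;> simp
    · simp
  | op l hl js d f w hf hadm hvfg ih =>
    have hsum : |(∑ q, f q) i| ≤ 1 := by
      by_cases hex : ∃ q, i ∈ (f q).support
      · obtain ⟨q, hq⟩ := hex
        rw [sum_apply_of_mem _ (Finset.mem_univ q) hq]
        · exact ih q
        · intro q _ r _ hqr
          rcases lt_or_gt_of_ne hqr with h | h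
          · exact (not_mem_of_blocks (adm_lt hadm h)).1
          · exact (not_mem_of_blocks (adm_lt hadm h)).2
      · push Not at hex
        rw [Finsupp.finsetSum_apply, Finset.sum_eq_zero]
        · simp
        · intro q _
          simpa using hex q
    have h2 : (1 : ℝ) ≤ ((∏ i, P.m (js i) : ℕ) : ℝ) := by
      have := P.two_le_prod hl js
      exact_mod_cast (by omega : 1 ≤ ∏ i, P.m (js i))
    rw [Finsupp.smul_apply, smul_eq_mul, abs_mul, abs_of_nonneg (by positivity)]
    exact mul_le_one₀ (inv_le_one_of_one_le₀ h2) (abs_nonneg _) hsum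

/-- The norming set is closed under restriction to subsets of the natural numbers, with the same
weight. -/
theorem WIW.filter {P : IWParams} {f : c00} {w : ℕ∞} (h : WIW P f w) (E : Finset ℕ) :
    f.filter (· ∈ E) = 0 ∨ WIW P (f.filter (· ∈ E)) w := by
  classical
  induction h with
  | unit k s hs =>
    by_cases hk : k ∈ E
    · right
      rw [Finsupp.filter_single_of_pos _ hk]
      exact WIW.unit k s hs
    · left
      rw [Finsupp.filter_single_of_neg _ hk]
  | op l hl js d f w hf hadm hvfg ih =>
    right
    have hsub : ∀ q, ((f q).filter (· ∈ E)).support ⊆ (f q).support := by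
      intro q
      rw [Finsupp.support_filter]
      exact Finset.filter_subset _ _
    set I : Finset (Fin d) := Finset.univ.filter fun q => (f q).filter (· ∈ E) ≠ 0 with hI
    have hIne : ∀ q ∈ I, ((f q).filter (· ∈ E)).support.Nonempty := by
      intro q hq
      exact Finsupp.support_nonempty_iff.2 (Finset.mem_filter.1 hq).2
    have hmin : ∀ q ∈ I, minSupp (f q) ≤ minSupp ((f q).filter (· ∈ E)) := fun q hq =>
      minSupp_mono (hIne q hq) (hsub q)
    have hmax : ∀ q ∈ I, maxSupp ((f q).filter (· ∈ E)) ≤ maxSupp (f q) := fun q hq =>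
      maxSupp_mono (hIne q hq) (hsub q)
    have hord : ∀ q ∈ I, ∀ r ∈ I, minSupp ((f q).filter (· ∈ E)) ≤ minSupp ((f r).filter (· ∈ E)) →
        q ≤ r := by
      intro q hq r hr hle
      by_contra hc
      have h1 := adm_lt hadm (not_le.1 hc)
      have h2 := minSupp_le_maxSupp ((f r).filter (· ∈ E))
      have h3 := hmin q hq
      have h4 := hmax r hr
      omega
    have hsum : (((∏ i, P.m (js i) : ℕ) : ℝ)⁻¹ • ∑ q, f q).filter (· ∈ E)
        = ((∏ i, P.m (js i) : ℕ) : ℝ)⁻¹ • ∑ q ∈ I, (f q).filter (· ∈ E) := by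
      rw [Finsupp.filter_smul]
      congr 1
      have : (∑ q, f q).filter (· ∈ E) = ∑ q, (f q).filter (· ∈ E) :=
        map_sum (Finsupp.filterAddHom (M := ℝ) (· ∈ E)) f Finset.univ
      rw [this, hI, Finset.sum_filter_ne_zero]
    rw [hsum]
    refine WIW.mk_indexed I (fun q => (f q).filter (· ∈ E)) w hl js ?_ hIne ?_ ?_ ?_
    · intro q hq
      exact (ih q).resolve_left (Finset.mem_filter.1 hq).2
    · intro q hq r hr h
      exact le_antisymm (hord q hq r hr h.le) (hord r hr q hq h.ge)
    · intro q hq r hr hlt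
      have hqr : q < r := by
        refine lt_of_le_of_ne (hord q hq r hr hlt.le) ?_
        rintro rfl
        exact lt_irrefl _ hlt
      refine ⟨(hmax q hq).trans_lt ((adm_lt hadm hqr).trans_le (hmin r hr)), ?_⟩
      refine lt_of_le_of_lt ?_ (adm_vfg hadm hvfg hqr)
      exact_mod_cast hmax q hq
    · refine (adm_sch hadm).spread id (by simp) hmin ?_ (fun _ _ _ _ h => h)
      intro q hq r hr hle
      rcases (hord q hq r hr hle).eq_or_lt with rfl | hlt
      · exact le_rfl
      · exact (minSupp_le_maxSupp _).trans (adm_lt hadm hlt).le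

/-! ### The norm on `c00` -/

theorem WIW.eval_le_l1 {P : IWParams} {f : c00} {w : ℕ∞} (h : WIW P f w) (x : c00) :
    evalPair f x ≤ ∑ i ∈ x.support, |x i| := by
  have h1 : evalPair f x = evalPair (f.filter (· ∈ x.support)) x :=
    (evalPair_filter _ f x (le_refl _)).symm
  have h2 : evalPair (f.filter (· ∈ x.support)) x
      = ∑ i ∈ x.support, (f.filter (· ∈ x.support)) i * x i := by
    unfold evalPair
    refine Finsupp.sum_of_support_subset _ ?_ _ (by simp)
    intro i hi
    rw [Finsupp.support_filter, Finset.mem_filter] at hi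
    exact hi.2
  rw [h1, h2]
  refine Finset.sum_le_sum fun i hi => ?_
  rw [Finsupp.filter_apply_pos _ _ hi]
  refine (le_abs_self _).trans ?_
  rw [abs_mul]
  exact mul_le_of_le_one_left (abs_nonneg _) (h.abs_le_one i)

theorem WIW.eval_le {P : IWParams} {f : c00} {w : ℕ∞} (h : WIW P f w) (x : c00) :
    evalPair f x ≤ iwNorm P x := by
  refine le_csSup ⟨∑ i ∈ x.support, |x i|, ?_⟩ ⟨f, ⟨w, h⟩, rfl⟩
  rintro r ⟨g, ⟨v, hg⟩, rfl⟩
  exact hg.eval_le_l1 x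

theorem WIW.abs_eval_le {P : IWParams} {f : c00} {w : ℕ∞} (h : WIW P f w) (x : c00) :
    |evalPair f x| ≤ iwNorm P x := by
  refine abs_le.2 ⟨?_, h.eval_le x⟩
  have := h.neg.eval_le x
  rw [evalPair_neg_left] at this
  linarith

theorem iwNorm_set_nonempty (P : IWParams) (x : c00) :
    {r | ∃ f, memWIW P f ∧ r = evalPair f x}.Nonempty :=
  ⟨_, Finsupp.single 0 1, ⟨⊤, WIW.unit 0 1 (Or.inl rfl)⟩, rfl⟩

theorem iwNorm_le {P : IWParams} {x : c00} {B : ℝ}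
    (h : ∀ f w, WIW P f w → evalPair f x ≤ B) : iwNorm P x ≤ B := by
  refine csSup_le (iwNorm_set_nonempty P x) ?_
  rintro r ⟨g, ⟨v, hg⟩, rfl⟩
  exact h g v hg

theorem exists_norming {P : IWParams} {x : c00} {r : ℝ} (h : r < iwNorm P x) :
    ∃ f w, WIW P f w ∧ r < evalPair f x := by
  obtain ⟨_, ⟨g, ⟨v, hg⟩, rfl⟩, hr⟩ := exists_lt_of_lt_csSup (iwNorm_set_nonempty P x) h
  exact ⟨g, v, hg, hr⟩

theorem iwNorm_pos {P : IWParams} {x : c00} (h : x.support.Nonempty) : 0 < iwNorm P x := by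
  obtain ⟨i, hi⟩ := h
  have h1 := (WIW.unit (P := P) i 1 (Or.inl rfl)).abs_eval_le x
  rw [evalPair_single, one_mul] at h1
  exact (abs_pos.2 (Finsupp.mem_support_iff.1 hi)).trans_le h1

theorem iwNorm_smul_le (P : IWParams) {c : ℝ} (hc : 0 ≤ c) (x : c00) :
    iwNorm P (c • x) ≤ c * iwNorm P x :=
  iwNorm_le fun f w hf => by
    rw [evalPair_smul_right]
    exact mul_le_mul_of_nonneg_left (hf.eval_le x) hc

theorem iwNorm_smul (P : IWParams) {c : ℝ} (hc : 0 < c) (x : c00) :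
    iwNorm P (c • x) = c * iwNorm P x := by
  refine le_antisymm (iwNorm_smul_le P hc.le x) ?_
  have := iwNorm_smul_le P (inv_nonneg.2 hc.le) (c • x)
  rw [smul_smul, inv_mul_cancel₀ hc.ne', one_smul] at this
  rwa [le_inv_mul_iff₀ hc] at this

/-! ### Block sequences -/

/-- Dependent choice: a relation that can be continued inside `Q` has an infinite chain in `Q`. -/
theorem exists_chain {α : Type*} {Q : α → Prop} {R : α → α → Prop} (h0 : ∃ a, Q a)
    (h : ∀ a, Q a → ∃ b, Q b ∧ R a b) : ∃ u : ℕ → α, (∀ n, Q (u n)) ∧ ∀ n, R (u n) (u (n + 1)) := by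
  obtain ⟨a0, ha0⟩ := h0
  choose! s hs using h
  let u : ℕ → α := fun n => s^[n] a0
  have hu : ∀ n, Q (u n) := by
    intro n
    induction n with
    | zero => exact ha0
    | succ n ih =>
      simp only [u, Function.iterate_succ_apply']
      exact (hs _ ih).1
  refine ⟨u, hu, fun n => ?_⟩
  have := (hs _ (hu n)).2
  simpa only [u, Function.iterate_succ_apply'] using this

/-- Nonzero successive vectors. -/
def IsBlk (u : ℕ → c00) : Prop :=
  (∀ k, (u k).support.Nonempty) ∧ ∀ k, Blocks (u k) (u (k + 1))

namespace IsBlk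

variable {u : ℕ → c00}

theorem lt (hu : IsBlk u) {i j : ℕ} (hij : i < j) : maxSupp (u i) < minSupp (u j) := by
  induction hij with
  | refl => exact hu.2 i
  | step _ ih => exact ih.trans ((minSupp_le_maxSupp _).trans_lt (hu.2 _))

theorem min_strictMono (hu : IsBlk u) : StrictMono fun i => minSupp (u i) := fun _ _ hij =>
  (minSupp_le_maxSupp _).trans_lt (hu.lt hij)

theorem max_strictMono (hu : IsBlk u) : StrictMono fun i => maxSupp (u i) := fun _ _ hij =>
  (hu.lt hij).trans_le (minSupp_le_maxSupp _)

theorem disj (hu : IsBlk u) {q r : ℕ} (hqr : q ≠ r) : ∀ i ∈ (u q).support, i ∉ (u r).support := by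
  rcases lt_or_gt_of_ne hqr with h | h
  · exact (not_mem_of_blocks (hu.lt h)).1
  · exact (not_mem_of_blocks (hu.lt h)).2

theorem comp (hu : IsBlk u) {σ : ℕ → ℕ} (hσ : StrictMono σ) : IsBlk fun i => u (σ i) :=
  ⟨fun _ => hu.1 _, fun k => hu.lt (hσ (Nat.lt_succ_self k))⟩

theorem support_subset_lc (hu : IsBlk u) {c : ℕ →₀ ℝ} {r : ℕ} (hr : r ∈ c.support) :
    (u r).support ⊆ (Finsupp.linearCombination ℝ u c).support := by
  intro i hi
  have hs : ∀ q ∈ c.support, (c q • u q).support = (u q).support := fun q hq =>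
    Finsupp.support_smul_eq (Finsupp.mem_support_iff.1 hq)
  have := sum_apply_of_mem (I := c.support) (f := fun q => c q • u q) (fun q hq r hr hqr => by
    rw [hs q hq, hs r hr]
    exact hu.disj hqr) hr (by rw [hs r hr]; exact hi)
  rw [Finsupp.linearCombination_apply, Finsupp.sum, Finsupp.mem_support_iff, this,
    Finsupp.smul_apply]
  exact smul_ne_zero (Finsupp.mem_support_iff.1 hr) (Finsupp.mem_support_iff.1 hi)

end IsBlk

theorem exists_of_mem_support_lc {u : ℕ → c00} {c : ℕ →₀ ℝ} {i : ℕ}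
    (hi : i ∈ (Finsupp.linearCombination ℝ u c).support) :
    ∃ r ∈ c.support, i ∈ (u r).support := by
  by_contra hc
  push Not at hc
  rw [Finsupp.mem_support_iff] at hi
  apply hi
  rw [Finsupp.linearCombination_apply, Finsupp.sum, Finsupp.finsetSum_apply]
  refine Finset.sum_eq_zero fun r hr => ?_
  have := hc r hr
  rw [Finsupp.notMem_support_iff] at this
  simp [this]

/-- The sum of the coefficients. -/
noncomputable def mass : (ℕ →₀ ℝ) →ₗ[ℝ] ℝ := Finsupp.linearCombination ℝ fun _ => (1 : ℝ)

theorem mass_eq (c : ℕ →₀ ℝ) : mass c = ∑ i ∈ c.support, c i := by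
  simp [mass, Finsupp.linearCombination_apply, Finsupp.sum]

theorem sum_le_mass {c : ℕ →₀ ℝ} (hc : ∀ i, 0 ≤ c i) (G : Finset ℕ) :
    ∑ i ∈ G, c i ≤ mass c := by
  classical
  rw [mass_eq, ← Finset.sum_subset (Finset.inter_subset_left (s₁ := G) (s₂ := c.support))]
  · exact Finset.sum_le_sum_of_subset_of_nonneg Finset.inter_subset_right fun i _ _ => hc i
  · intro i hi hnot
    simpa [hi] using hnot

/-! ### Special convex combinations -/

/-- The coefficients `c` form a convex combination supported on an `𝓢ₙ`-set for `t` that gives mass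
at most `ε` to every `𝓢ₙ₋₁`-set for `t'` (no smallness condition when `n = 0`). Two functions are
used because sets are measured by the minima of the supports of blocks when bounding norms from
below, and by the maxima when bounding them from above. -/
structure IsSpec (t t' : ℕ → ℕ) (n : ℕ) (ε : ℝ) (c : ℕ →₀ ℝ) : Prop where
  nonneg : ∀ i, 0 ≤ c i
  mass_one : mass c = 1
  sch : Sch t n c.support
  small : ∀ m, m + 1 = n → ∀ G : Finset ℕ, Sch t' m G → ∑ i ∈ G, c i ≤ ε

theorem IsSpec.nonempty {t t' : ℕ → ℕ} {n : ℕ} {ε : ℝ} {c : ℕ →₀ ℝ} (h : IsSpec t t' n ε c) :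
    c.support.Nonempty := by
  rw [Finsupp.support_nonempty_iff]
  rintro rfl
  simpa using h.mass_one

/-- Repeated averages: the average of `d` successive special convex combinations of level `n`,
each chosen with precision depending on the previous ones, is one of level `n + 1`. -/
theorem exists_isSpec {t t' : ℕ → ℕ} (ht : StrictMono t) (ht' : StrictMono t') (n : ℕ) :
    ∀ (ε : ℝ), 0 < ε → ∀ N : ℕ, ∃ c, IsSpec t t' n ε c ∧ ∀ i ∈ c.support, N ≤ i := by
  classical
  induction n with
  | zero =>
    intro ε _ N
    refine ⟨Finsupp.single N 1, ⟨?_, by simp [mass], ?_, fun m hm => by omega⟩, ?_⟩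
    · intro i
      rw [Finsupp.single_apply]
      split_ifs <;> simp
    · exact (Finset.card_le_card Finsupp.support_single_subset).trans (by simp)
    · intro i hi
      have := Finsupp.support_single_subset hi
      simp only [Finset.mem_singleton] at this
      exact this.ge
  | succ n ih =>
    intro ε hε N
    obtain ⟨d, hd⟩ := exists_nat_gt (2 / ε)
    have hd0 : (0 : ℝ) < d := lt_trans (by positivity) hd
    have hdε : 2 / (d : ℝ) ≤ ε := by
      rw [div_lt_iff₀ hε] at hd
      rw [div_le_iff₀ hd0]
      linarith
    let M : (ℕ →₀ ℝ) → ℕ := fun c => c.support.sup id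
    have hM : ∀ (c : ℕ →₀ ℝ), ∀ i ∈ c.support, i ≤ M c := fun c i hi =>
      Finset.le_sup (f := id) hi
    obtain ⟨u, hQ, hR⟩ := exists_chain
      (Q := fun c => (∃ δ, IsSpec t t' n δ c) ∧ ∀ i ∈ c.support, max N d ≤ i)
      (R := fun c c' => IsSpec t t' n (1 / (d * (t' (M c) + 1))) c' ∧
        ∀ i ∈ c'.support, M c < i)
      (by
        obtain ⟨c, hc, hcN⟩ := ih 1 one_pos (max N d)
        exact ⟨c, ⟨1, hc⟩, hcN⟩)
      (by
        rintro c -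
        obtain ⟨c', hc', hcN⟩ := ih (1 / (d * (t' (M c) + 1))) (by positivity)
          (max (max N d) (M c + 1))
        exact ⟨c', ⟨⟨_, hc'⟩, fun i hi => (le_max_left _ _).trans (hcN i hi)⟩, hc',
          fun i hi => (le_max_right _ _).trans (hcN i hi)⟩)
    have hspec : ∀ k, (∀ i, 0 ≤ u k i) ∧ mass (u k) = 1 ∧ Sch t n (u k).support ∧
        (u k).support.Nonempty := by
      intro k
      obtain ⟨δ, hδ⟩ := (hQ k).1
      exact ⟨hδ.nonneg, hδ.mass_one, hδ.sch, hδ.nonempty⟩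
    have hsep : ∀ k k', k < k' → ∀ i ∈ (u k').support, M (u k) < i := by
      intro k k' hk
      induction hk with
      | refl => exact (hR k).2
      | @step m _ ihm =>
        intro i hi
        obtain ⟨i', hi'⟩ := (hspec m).2.2.2
        exact (ihm i' hi').trans ((hM _ _ hi').trans_lt ((hR m).2 i hi))
    set c : ℕ →₀ ℝ := (d : ℝ)⁻¹ • ∑ k ∈ Finset.range d, u k with hc
    have hci : ∀ i, c i = (d : ℝ)⁻¹ * ∑ k ∈ Finset.range d, u k i := by
      intro i
      rw [hc, Finsupp.smul_apply, Finsupp.finsetSum_apply, smul_eq_mul]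
    have hsupp : ∀ i ∈ c.support, ∃ k < d, i ∈ (u k).support := by
      intro i hi
      by_contra hcon
      push Not at hcon
      rw [Finsupp.mem_support_iff, hci] at hi
      apply hi
      rw [Finset.sum_eq_zero, mul_zero]
      intro k hk
      simpa using hcon k (Finset.mem_range.1 hk)
    choose! g hg using hsupp
    refine ⟨c, ⟨?_, ?_, ?_, ?_⟩, ?_⟩
    · intro i
      rw [hci]
      exact mul_nonneg (by positivity) (Finset.sum_nonneg fun k _ => (hspec k).1 i)
    · rw [hc, map_smul, map_sum, Finset.sum_congr rfl fun k _ => (hspec k).2.1]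
      simp [hd0.ne']
    · refine ⟨d, g, fun i hi j hj hij => ?_, fun i hi => ⟨(hg i hi).1, ?_⟩, fun k => ?_⟩
      · by_contra hlt
        have h1 := hsep _ _ (not_le.1 hlt) i (hg i hi).2
        have h2 := hM _ _ (hg j hj).2
        have h3 := ht.le_iff_le.1 hij
        omega
      · exact (le_max_right N d).trans (((hQ _).2 i (hg i hi).2).trans ht.le_apply)
      · refine ((hspec k).2.2.1).subset fun i hi => ?_
        obtain ⟨hic, rfl⟩ := Finset.mem_filter.1 hi
        exact (hg i hic).2
    · intro m hm G hG
      obtain rfl : m = n := by omega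
      have hsum : ∑ i ∈ G, c i = (d : ℝ)⁻¹ * ∑ k ∈ Finset.range d, ∑ i ∈ G, u k i := by
        rw [Finset.sum_comm, Finset.mul_sum]
        exact Finset.sum_congr rfl fun i _ => hci i
      have hzero : ∀ k, (¬ ∃ i ∈ G, i ∈ (u k).support) → ∑ i ∈ G, u k i = 0 := by
        intro k hk
        push Not at hk
        exact Finset.sum_eq_zero fun i hi => by simpa using hk i hi
      by_cases hex : ∃ k, ∃ i ∈ G, i ∈ (u k).support
      swap
      · push Not at hex
        rw [hsum, Finset.sum_eq_zero, mul_zero]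
        · exact hε.le
        · exact fun k _ => hzero k (by push Not; exact hex k)
      -- `k₀` is the first of the averaged vectors that is met by `G`
      obtain ⟨k₀, ⟨i₀, hi₀G, hi₀⟩, hmin⟩ : ∃ k₀, (∃ i ∈ G, i ∈ (u k₀).support) ∧
          ∀ k < k₀, ¬ ∃ i ∈ G, i ∈ (u k).support :=
        ⟨Nat.find hex, Nat.find_spec hex, fun k hk => Nat.find_min hex hk⟩
      have hlater : ∀ k, k₀ < k → ∑ i ∈ G, u k i ≤ 1 / d := by
        intro k hk
        cases m with
        | zero =>
          rw [hzero k]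
          · positivity
          · rintro ⟨i, hiG, hi⟩
            have h1 : i = i₀ := Finset.card_le_one.1 hG _ hiG _ hi₀G
            have h2 := hsep _ _ hk i hi
            have h3 := hM _ _ hi₀
            omega
        | succ m =>
          obtain ⟨d', g', _, hg2, hg3⟩ := hG
          obtain ⟨k, rfl⟩ : ∃ k', k = k' + 1 := ⟨k - 1, by omega⟩
          have hfib : ∑ i ∈ G, u (k + 1) i
              = ∑ r ∈ Finset.range d', ∑ i ∈ G.filter (g' · = r), u (k + 1) i :=
            (Finset.sum_fiberwise_of_maps_to
              (fun i hi => Finset.mem_range.2 (hg2 i hi).1) _).symm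
          rw [hfib]
          have hb : ∀ r ∈ Finset.range d', ∑ i ∈ G.filter (g' · = r), u (k + 1) i
              ≤ 1 / (d * (t' (M (u k)) + 1)) := fun r _ => (hR k).1.small m rfl _ (hg3 r)
          refine (Finset.sum_le_sum hb).trans ?_
          have hd' : d' ≤ t' (M (u k)) := by
            refine (hg2 i₀ hi₀G).2.trans (ht'.monotone ?_)
            refine (hM _ _ hi₀).trans ?_
            rcases (Nat.lt_succ_iff.1 hk).eq_or_lt with rfl | hlt
            · exact le_rfl
            · obtain ⟨i', hi'⟩ := (hspec k).2.2.2
              exact (hsep _ _ hlt i' hi').le.trans (hM _ _ hi')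
          have hd'' : (d' : ℝ) ≤ t' (M (u k)) + 1 := by
            have : (d' : ℝ) ≤ t' (M (u k)) := by exact_mod_cast hd'
            linarith
          rw [Finset.sum_const, Finset.card_range, nsmul_eq_mul, mul_one_div,
            div_le_div_iff₀ (by positivity) hd0]
          nlinarith
      have hall : ∀ k ∈ Finset.range d, ∑ i ∈ G, u k i ≤ (if k = k₀ then 1 else 0) + 1 / d := by
        intro k _
        rcases lt_trichotomy k k₀ with h | h | h
        · rw [hzero k (hmin k h), if_neg h.ne]
          positivity
        · rw [if_pos h]
          have h1 := sum_le_mass (hspec k).1 G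
          rw [(hspec k).2.1] at h1
          have : (0 : ℝ) ≤ 1 / d := by positivity
          linarith
        · rw [if_neg h.ne', zero_add]
          exact hlater k h
      have htot : ∑ k ∈ Finset.range d, ∑ i ∈ G, u k i ≤ 2 := by
        refine (Finset.sum_le_sum hall).trans ?_
        rw [Finset.sum_add_distrib, Finset.sum_ite_eq', Finset.sum_const, Finset.card_range,
          nsmul_eq_mul, mul_one_div, div_self hd0.ne']
        split_ifs <;> norm_num
      rw [hsum]
      refine le_trans ?_ hdε
      rw [div_eq_inv_mul]
      exact mul_le_mul_of_nonneg_left htot (by positivity)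
    · intro i hi
      exact (le_max_left N d).trans ((hQ _).2 i (hg i hi).2)

/-! ### Lower estimates on admissible sums -/

/-- Functionals `h i` living on the supports of the blocks `z i` act diagonally. -/
theorem eval_diag {z h : ℕ → c00} (hz : IsBlk z) (hh : ∀ i, (h i).support ⊆ (z i).support)
    {β v : ℝ} (hv : 0 ≤ v) (hβ : ∀ i, β ≤ evalPair (h i) (z i)) {a : ℕ →₀ ℝ}
    (ha : ∀ i, 0 ≤ a i) :
    v * β * mass a ≤
      evalPair (v • ∑ i ∈ a.support, h i) (Finsupp.linearCombination ℝ z a) := by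
  rw [evalPair_lc, mass_eq, Finset.mul_sum]
  refine Finset.sum_le_sum fun i hi => ?_
  rw [evalPair_smul_left, evalPair_sum_left, Finset.sum_eq_single i]
  · have := mul_le_mul_of_nonneg_left (hβ i) (mul_nonneg hv (ha i))
    linarith
  · intro k _ hki
    exact evalPair_eq_zero fun x hx => hz.disj hki x (hh k hx)
  · exact fun h => absurd hi h

theorem Decomp.p_le {P : IWParams} {f : c00} {w p : ℕ} (D : Decomp P f w p) : p ≤ w * P.n w := by
  have h1 : ∀ i, P.n (D.js i) ≤ P.n w := by
    intro i
    refine P.n_mono.monotone ?_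
    have := P.m_le_prod D.js i
    rw [D.prod_eq] at this
    exact (P.m_mono.le_apply).trans this
  have h2 : D.l ≤ w := by
    have := P.two_pow_le_prod D.js
    rw [D.prod_eq] at this
    exact (Nat.lt_two_pow_self).le.trans this
  rw [← D.sum_eq]
  calc ∑ i, P.n (D.js i) ≤ ∑ _i : Fin D.l, P.n w := Finset.sum_le_sum fun i _ => h1 i
    _ = D.l * P.n w := by simp
    _ ≤ w * P.n w := Nat.mul_le_mul_right _ h2

/-- The lower `ℓ₁`-estimate `‖∑ aᵢ zᵢ‖ ≥ (4 m_j)⁻¹ ∑ aᵢ` on `𝓢_{n_j}`-admissible sums with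
nonnegative coefficients, for every `j`. -/
def LowerEst (P : IWParams) (z : ℕ → c00) : Prop :=
  ∀ (j : ℕ) (a : ℕ →₀ ℝ), (∀ i, 0 ≤ a i) → Sch (fun i => minSupp (z i)) (P.n j) a.support →
    mass a / (4 * P.m j) ≤ iwNorm P (Finsupp.linearCombination ℝ z a)

/-- If the norming functionals of the blocks are very fast growing, they can be combined
directly. -/
theorem lowerEst_of_vfg {P : IWParams} {z f : ℕ → c00} {w : ℕ → ℕ∞} (hz : IsBlk z)
    (hf : ∀ i, WIW P (f i) (w i)) (hsub : ∀ i, (f i).support ⊆ (z i).support)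
    (hev : ∀ i, 3 / 4 < evalPair (f i) (z i))
    (hw : ∀ i, (maxSupp (z i) : ℕ∞) < w (i + 1)) : LowerEst P z := by
  intro j a ha hS
  have hne : ∀ i, (f i).support.Nonempty := by
    intro i
    obtain ⟨x, hx, _⟩ := exists_mem_of_evalPair_ne (lt_trans (by norm_num) (hev i)).ne'
    exact ⟨x, hx⟩
  have hmin : ∀ i, minSupp (z i) ≤ minSupp (f i) := fun i => minSupp_mono (hne i) (hsub i)
  have hmax : ∀ i, maxSupp (f i) ≤ maxSupp (z i) := fun i => maxSupp_mono (hne i) (hsub i)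
  have hord : ∀ i k, minSupp (f i) ≤ minSupp (f k) → i ≤ k := by
    intro i k hik
    by_contra hc
    have h1 := hz.lt (not_le.1 hc)
    have h2 := hmin i
    have h3 := hmax k
    have h4 := minSupp_le_maxSupp (f k)
    omega
  have key := WIW.mk_indexed (P := P) a.support f w one_pos (fun _ : Fin 1 => j)
    (fun q _ => hf q) (fun q _ => hne q)
    (fun q _ r _ h => le_antisymm (hord q r h.le) (hord r q h.ge))
    (fun q _ r _ hlt => by
      have hqr : q < r := by
        refine lt_of_le_of_ne (hord q r hlt.le) ?_
        rintro rfl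
        exact lt_irrefl _ hlt
      refine ⟨(hmax q).trans_lt ((hz.lt hqr).trans_le (hmin r)), ?_⟩
      obtain ⟨r, rfl⟩ : ∃ r', r = r' + 1 := ⟨r - 1, by omega⟩
      refine lt_of_le_of_lt ?_ (hw r)
      exact_mod_cast (hmax q).trans (hz.max_strictMono.monotone (Nat.lt_succ_iff.1 hqr)))
    (by
      simp only [Finset.univ_unique, Finset.sum_const, Finset.card_singleton, one_smul]
      refine hS.spread id (fun i hi => hi) (fun i _ => hmin i) (fun i _ k _ hik => ?_)
        (fun _ _ _ _ h => h)
      exact hz.min_strictMono.monotone (hord i k hik))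
  simp only [Finset.univ_unique, Finset.prod_const, Finset.card_singleton, pow_one] at key
  have h1 := eval_diag hz hsub (v := ((P.m j : ℕ) : ℝ)⁻¹) (by positivity) (fun i => (hev i).le) ha
  refine le_trans ?_ (h1.trans (key.eval_le _))
  have hm : (0 : ℝ) < P.m j := by
    have := P.two_le_m j
    positivity
  have hmass : 0 ≤ mass a := by
    rw [mass_eq]
    exact Finset.sum_nonneg fun i _ => ha i
  rw [show mass a / (4 * P.m j) = (P.m j : ℝ)⁻¹ * (1 / 4) * mass a by field_simp]
  gcongr
  norm_num

/-- If the norming functionals of the blocks have the same weight `w` and the same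
admissibility `p`, the sequences they are built from, without their first terms, combine into one
very fast growing sequence. Deleting the first terms costs at most `1 / w ≤ 1 / 2`. -/
theorem lowerEst_of_const {P : IWParams} {z f : ℕ → c00} {w p : ℕ} (hz : IsBlk z)
    (hzn : ∀ i, iwNorm P (z i) = 1)
    (D : ∀ i, Decomp P (f i) w p) (hsub : ∀ i, (f i).support ⊆ (z i).support)
    (hev : ∀ i, 3 / 4 < evalPair (f i) (z i)) : LowerEst P z := by
  classical
  intro j a ha hS
  have hw2 : (2 : ℝ) ≤ w := by exact_mod_cast (D 0).two_le
  have hw0 : (0 : ℝ) < w := by linarith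
  have hm : (0 : ℝ) < P.m j := by
    have := P.two_le_m j
    positivity
  have hFsub : ∀ i q, q < (D i).d → ((D i).F q).support ⊆ (z i).support := fun i q hq =>
    ((D i).support_subset hq).trans (hsub i)
  have hmin : ∀ i q, q < (D i).d → minSupp (z i) ≤ minSupp ((D i).F q) := fun i q hq =>
    minSupp_mono ((D i).ne q hq) (hFsub i q hq)
  have hmax : ∀ i q, q < (D i).d → maxSupp ((D i).F q) ≤ maxSupp (z i) := fun i q hq =>
    maxSupp_mono ((D i).ne q hq) (hFsub i q hq)
  let h : ℕ → c00 := fun i => ∑ q ∈ (Finset.range (D i).d).erase 0, (D i).F q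
  have hhsub : ∀ i, (h i).support ⊆ (z i).support := by
    intro i x hx
    by_contra hc
    rw [Finsupp.mem_support_iff, Finsupp.finsetSum_apply] at hx
    apply hx
    refine Finset.sum_eq_zero fun q hq => ?_
    rw [Finset.mem_erase, Finset.mem_range] at hq
    by_contra hne
    exact hc (hFsub i q hq.2 (Finsupp.mem_support_iff.2 hne))
  have hhev : ∀ i, (w : ℝ) * (1 / 4) ≤ evalPair (h i) (z i) := by
    intro i
    have h1 := (D i).eval_eq (z i)
    have h2 := hev i
    have h3 : ∑ q ∈ Finset.range (D i).d, evalPair ((D i).F q) (z i)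
        ≤ 1 + evalPair (h i) (z i) := by
      rw [evalPair_sum_left]
      by_cases hd : 0 < (D i).d
      · rw [← Finset.add_sum_erase _ _ (Finset.mem_range.2 hd)]
        have := ((D i).mem 0 hd).eval_le (z i)
        rw [hzn] at this
        linarith
      · rw [Finset.erase_eq_of_notMem (by simpa using hd)]
        linarith
    rw [h1, lt_inv_mul_iff₀ hw0] at h2
    linarith
  let I : Finset ((_ : ℕ) × ℕ) := a.support.sigma fun i => (Finset.range (D i).d).erase 0
  have hI : ∀ x ∈ I, x.1 ∈ a.support ∧ x.2 ≠ 0 ∧ x.2 < (D x.1).d := by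
    intro x hx
    simpa [I] using hx
  have hord : ∀ x ∈ I, ∀ x' ∈ I,
      minSupp ((D x.1).F x.2) ≤ minSupp ((D x'.1).F x'.2) → x.1 ≤ x'.1 := by
    intro x hx x' hx' hle
    by_contra hc
    have h1 := hz.lt (not_le.1 hc)
    have h2 := hmin _ _ (hI x hx).2.2
    have h3 := hmax _ _ (hI x' hx').2.2
    have h4 := minSupp_le_maxSupp ((D x'.1).F x'.2)
    omega
  have hord2 : ∀ i q r, q < (D i).d → r < (D i).d →
      minSupp ((D i).F q) ≤ minSupp ((D i).F r) → q ≤ r := by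
    intro i q r hq hr hle
    by_contra hc
    have h1 := (D i).block r q (not_le.1 hc) hq
    have h4 := minSupp_le_maxSupp ((D i).F r)
    omega
  have key := WIW.mk_indexed (P := P) I (fun x => (D x.1).F x.2) (fun x => (D x.1).W x.2)
    (Nat.succ_pos (D 0).l) (Fin.cons j (D 0).js : Fin ((D 0).l + 1) → ℕ)
    (fun x hx => (D x.1).mem _ (hI x hx).2.2) (fun x hx => (D x.1).ne _ (hI x hx).2.2)
    (by
      rintro ⟨i, q⟩ hx ⟨i', q'⟩ hx' hxx'
      obtain rfl : i = i' := le_antisymm (hord _ hx _ hx' hxx'.le) (hord _ hx' _ hx hxx'.ge)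
      have h1 := (hI _ hx).2.2
      have h2 := (hI _ hx').2.2
      obtain rfl : q = q' := le_antisymm (hord2 _ _ _ h1 h2 hxx'.le) (hord2 _ _ _ h2 h1 hxx'.ge)
      rfl)
    (by
      rintro ⟨i, q⟩ hx ⟨i', q'⟩ hx' hlt
      have h1 := (hI _ hx).2.2
      obtain ⟨-, h0, h2⟩ := hI _ hx'
      dsimp only at h0 h1 h2 hlt ⊢
      rcases (hord _ hx _ hx' hlt.le).eq_or_lt with h | h
      · dsimp only at h
        subst h
        have hqq : q < q' := by
          refine lt_of_le_of_ne (hord2 _ _ _ h1 h2 hlt.le) ?_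
          rintro rfl
          exact lt_irrefl _ hlt
        exact ⟨(D i).block _ _ hqq h2, (D i).vfg _ _ hqq h2⟩
      · dsimp only at h
        have h3 := hmax _ _ h1
        have h4 := hz.lt h
        refine ⟨h3.trans_lt (h4.trans_le (hmin _ _ h2)), ?_⟩
        -- `q'` is not the first index of its sequence, so its weight exceeds the support of
        -- the first term, which lies beyond the block `z i`
        have h5 := (D i').vfg 0 q' (Nat.pos_of_ne_zero h0) h2
        refine lt_of_le_of_lt ?_ h5
        have h6 := hmin i' 0 (lt_of_le_of_lt (Nat.zero_le _) h2)
        have h7 := minSupp_le_maxSupp ((D i').F 0)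
        exact_mod_cast (by omega : maxSupp ((D i).F q) ≤ maxSupp ((D i').F 0)))
    (by
      rw [Fin.sum_univ_succ]
      simp only [Fin.cons_zero, Fin.cons_succ]
      rw [(D 0).sum_eq, add_comm]
      refine hS.comp (fun x : (_ : ℕ) × ℕ => x.1) (fun x hx => (hI x hx).1)
        (fun x hx => hmin _ _ (hI x hx).2.2)
        (fun x hx x' hx' hle => hz.min_strictMono.monotone (hord x hx x' hx' hle)) (fun i => ?_)
      refine (D i).sch.spread (fun x : (_ : ℕ) × ℕ => x.2) ?_ ?_ ?_ ?_
      · rintro ⟨i', q⟩ hx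
        obtain ⟨hxI, rfl⟩ := Finset.mem_filter.1 hx
        exact Finset.mem_range.2 (hI _ hxI).2.2
      · rintro ⟨i', q⟩ hx
        obtain ⟨hx, rfl⟩ := Finset.mem_filter.1 hx
        exact le_rfl
      · rintro ⟨i', q⟩ hx ⟨i'', q'⟩ hx' hle
        obtain ⟨hx, rfl⟩ := Finset.mem_filter.1 hx
        obtain ⟨hx', h⟩ := Finset.mem_filter.1 hx'
        dsimp only at h
        subst h
        exact hle
      · rintro ⟨i', q⟩ hx ⟨i'', q'⟩ hx' hle
        obtain ⟨hx, rfl⟩ := Finset.mem_filter.1 hx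
        obtain ⟨hx', h⟩ := Finset.mem_filter.1 hx'
        dsimp only at h hle
        subst h
        subst hle
        rfl)
  have hprod : ((∏ i, P.m ((Fin.cons j (D 0).js : Fin ((D 0).l + 1) → ℕ) i) : ℕ) : ℝ)
      = P.m j * w := by
    rw [Fin.prod_univ_succ]
    simp only [Fin.cons_zero, Fin.cons_succ]
    rw [(D 0).prod_eq]
    push_cast
    rfl
  have hsum : ∑ x ∈ I, (D x.1).F x.2 = ∑ i ∈ a.support, h i := Finset.sum_sigma _ _ _
  rw [hprod, hsum] at key
  have h1 := eval_diag hz hhsub (v := ((P.m j : ℝ) * w)⁻¹) (by positivity) hhev ha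
  refine le_trans (le_of_eq ?_) (h1.trans (key.eval_le _))
  field_simp

/-- Every normalized block sequence has a subsequence with the lower estimate: either the weights
of its norming functionals tend to infinity, or infinitely many of them agree. -/
theorem exists_lowerEst {P : IWParams} {y : ℕ → c00} (hy : IsNormBlockSeq (iwNorm P) y) :
    ∃ σ : ℕ → ℕ, StrictMono σ ∧ LowerEst P fun i => y (σ i) := by
  have hblk : IsBlk y := ⟨hy.1, hy.2.1⟩
  have hex : ∀ i, ∃ f w, WIW P f w ∧ f.support ⊆ (y i).support ∧ 3 / 4 < evalPair f (y i) := by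
    intro i
    obtain ⟨f, w, hf, hev⟩ := exists_norming (P := P) (x := y i) (r := 3 / 4)
      (by rw [hy.2.2 i]; norm_num)
    rw [← evalPair_filter (y i).support f (y i) (le_refl _)] at hev
    refine ⟨f.filter (· ∈ (y i).support), w, (hf.filter _).resolve_left ?_, ?_, hev⟩
    · intro h0
      rw [h0, evalPair_zero_left] at hev
      norm_num at hev
    · intro x hx
      rw [Finsupp.support_filter, Finset.mem_filter] at hx
      exact hx.2
  choose f w hf hsub hev using hex
  by_cases hB : ∃ v p, ∃ᶠ i in atTop, Nonempty (Decomp P (f i) v p)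
  · obtain ⟨v, p, hfreq⟩ := hB
    obtain ⟨σ, hσ, hσD⟩ := extraction_of_frequently_atTop hfreq
    exact ⟨σ, hσ, lowerEst_of_const (hblk.comp hσ) (fun i => hy.2.2 _)
      (fun i => (hσD i).some) (fun i => hsub _) (fun i => hev _)⟩
  · push Not at hB
    have hlarge : ∀ M : ℕ, ∀ᶠ i in atTop, (M : ℕ∞) < w i := by
      intro M
      have hbox : ∀ᶠ i in atTop, ∀ x ∈ Finset.range (M + 1) ×ˢ Finset.range (M * P.n M + 1),
          IsEmpty (Decomp P (f i) x.1 x.2) := by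
        rw [Filter.eventually_all_finset]
        rintro ⟨v, p⟩ _
        simpa using hB v p
      filter_upwards [hbox] with i hi
      rcases (hf i).decomp with h | ⟨v, p, hv, ⟨D⟩⟩
      · rw [h]
        exact ENat.natCast_lt_top M
      · rw [hv]
        by_contra hc
        have hvM : v ≤ M := by exact_mod_cast not_lt.1 hc
        have hp : p ≤ M * P.n M :=
          D.p_le.trans (Nat.mul_le_mul hvM (P.n_mono.monotone hvM))
        exact (hi (v, p) (by simp; omega)).false D
    obtain ⟨σ, -, hσ⟩ := exists_chain (Q := fun _ : ℕ => True)
      (R := fun i k => i < k ∧ (maxSupp (y i) : ℕ∞) < w k) ⟨0, trivial⟩ (by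
        intro i _
        obtain ⟨k, h1, h2⟩ := ((hlarge (maxSupp (y i))).and (eventually_gt_atTop i)).exists
        exact ⟨k, trivial, h2, h1⟩)
    have hσm : StrictMono σ := strictMono_nat_of_lt_succ fun n => (hσ n).1
    exact ⟨σ, hσm, lowerEst_of_vfg (hblk.comp hσm) (fun i => hf _) (fun i => hsub _)
      (fun i => hev _) (fun i => (hσ i).2)⟩

/-! ### Special convex combinations of norm close to one -/

theorem linearCombination_comp (z : ℕ → c00) (a : ℕ → ℕ →₀ ℝ) (c : ℕ →₀ ℝ) :
    Finsupp.linearCombination ℝ (fun r => Finsupp.linearCombination ℝ z (a r)) c =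
      Finsupp.linearCombination ℝ z (Finsupp.linearCombination ℝ a c) := by
  rw [Finsupp.linearCombination_apply, Finsupp.linearCombination_apply ℝ (v := a), Finsupp.sum,
    Finsupp.sum, map_sum]
  exact Finset.sum_congr rfl fun r _ => by rw [map_smul]

/-- The combination `∑ aᵢ zᵢ` is a normalized vector supported beyond `N`, has nonnegative
coefficients of total mass at least `θ⁻ᵏ`, and its index set belongs to `𝓢_{nk}`. -/
structure IsLarge (P : IWParams) (z : ℕ → c00) (n : ℕ) (θ : ℝ) (k N : ℕ) (a : ℕ →₀ ℝ) : Prop where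
  nonneg : ∀ i, 0 ≤ a i
  lt_min : N < minSupp (Finsupp.linearCombination ℝ z a)
  norm_one : iwNorm P (Finsupp.linearCombination ℝ z a) = 1
  mass_le : θ⁻¹ ^ k ≤ mass a
  sch : Sch (fun i => minSupp (z i)) (n * k) a.support

theorem support_nonempty_of_lt_minSupp {x : c00} {N : ℕ} (h : N < minSupp x) :
    x.support.Nonempty := by
  by_contra hc
  simp [minSupp, hc] at h

theorem exists_isLarge_zero {P : IWParams} {z : ℕ → c00} (hz : IsNormBlockSeq (iwNorm P) z)
    (n : ℕ) (θ : ℝ) (N : ℕ) : ∃ a, IsLarge P z n θ 0 N a := by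
  have hblk : IsBlk z := ⟨hz.1, hz.2.1⟩
  refine ⟨Finsupp.single (N + 1) 1, ⟨?_, ?_, ?_, by simp [mass], ?_⟩⟩
  · intro i
    rw [Finsupp.single_apply]
    split_ifs <;> simp
  · rw [Finsupp.linearCombination_single, one_smul]
    exact (hblk.min_strictMono.le_apply (x := N + 1))
  · rw [Finsupp.linearCombination_single, one_smul]
    exact hz.2.2 _
  · exact (Finset.card_le_card Finsupp.support_single_subset).trans (by simp)

theorem exists_isLarge_seq {P : IWParams} {z : ℕ → c00} {n k : ℕ} {θ : ℝ}
    (h : ∀ N, ∃ a, IsLarge P z n θ k N a) (N : ℕ) :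
    ∃ a : ℕ → ℕ →₀ ℝ, (∀ r, IsLarge P z n θ k N (a r)) ∧
      IsNormBlockSeq (iwNorm P) fun r => Finsupp.linearCombination ℝ z (a r) := by
  obtain ⟨a, ha, hR⟩ := exists_chain (Q := fun a => IsLarge P z n θ k N a)
    (R := fun a a' => Blocks (Finsupp.linearCombination ℝ z a) (Finsupp.linearCombination ℝ z a'))
    (h N) (by
      intro a _
      obtain ⟨a', ha'⟩ := h (max N (maxSupp (Finsupp.linearCombination ℝ z a)))
      have := ha'.lt_min
      exact ⟨a', ⟨ha'.nonneg, by omega, ha'.norm_one, ha'.mass_le, ha'.sch⟩,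
        show _ < _ by omega⟩)
  exact ⟨a, ha, fun r => support_nonempty_of_lt_minSupp (ha r).lt_min, hR,
    fun r => (ha r).norm_one⟩

/-- Normalizing a special convex combination of large vectors whose norm is below `θ` increases the
mass by the factor `θ⁻¹`. -/
theorem isLarge_succ {P : IWParams} {z : ℕ → c00} (hz : IsBlk z) {n k N : ℕ} {θ ε : ℝ}
    (hθ : 0 < θ) {a : ℕ → ℕ →₀ ℝ} (ha : ∀ r, IsLarge P z n θ k N (a r)) {u : ℕ → c00}
    (hu : u = fun r => Finsupp.linearCombination ℝ z (a r)) (hub : IsBlk u) {t' : ℕ → ℕ}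
    {c : ℕ →₀ ℝ} (hc : IsSpec (fun r => minSupp (u r)) t' n ε c)
    (hlt : iwNorm P (Finsupp.linearCombination ℝ u c) < θ) :
    ∃ a', IsLarge P z n θ (k + 1) N a' := by
  classical
  set x := Finsupp.linearCombination ℝ u c with hx
  set b := Finsupp.linearCombination ℝ a c with hb
  have hxb : x = Finsupp.linearCombination ℝ z b := by
    rw [hx, hu]
    exact linearCombination_comp z a c
  have hxne : x.support.Nonempty := by
    obtain ⟨r, hr⟩ := hc.nonempty
    exact (hub.1 r).mono (hub.support_subset_lc hr)
  have hxpos : 0 < iwNorm P x := iwNorm_pos hxne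
  have hinv : 0 < (iwNorm P x)⁻¹ := inv_pos.2 hxpos
  have hT : Finsupp.linearCombination ℝ z ((iwNorm P x)⁻¹ • b) = (iwNorm P x)⁻¹ • x := by
    rw [map_smul, hxb]
  have hbapp : ∀ i, b i = ∑ r ∈ c.support, c r * a r i := by
    intro i
    rw [hb, Finsupp.linearCombination_apply, Finsupp.sum, Finsupp.finsetSum_apply]
    simp
  have hbm : θ⁻¹ ^ k ≤ mass b := by
    rw [hb, Finsupp.linearCombination_apply, Finsupp.sum, map_sum]
    calc θ⁻¹ ^ k = ∑ r ∈ c.support, c r * θ⁻¹ ^ k := by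
          rw [← Finset.sum_mul, ← mass_eq, hc.mass_one, one_mul]
      _ ≤ ∑ r ∈ c.support, mass (c r • a r) := by
          refine Finset.sum_le_sum fun r _ => ?_
          rw [map_smul, smul_eq_mul]
          exact mul_le_mul_of_nonneg_left (ha r).mass_le (hc.nonneg r)
  refine ⟨(iwNorm P x)⁻¹ • b, ⟨?_, ?_, ?_, ?_, ?_⟩⟩
  · intro i
    rw [Finsupp.smul_apply, smul_eq_mul, hbapp]
    exact mul_nonneg hinv.le
      (Finset.sum_nonneg fun r _ => mul_nonneg (hc.nonneg r) ((ha r).nonneg i))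
  · rw [hT]
    have hsupp : ((iwNorm P x)⁻¹ • x).support = x.support := Finsupp.support_smul_eq hinv.ne'
    have hmem : minSupp ((iwNorm P x)⁻¹ • x) ∈ x.support := by
      rw [← hsupp]
      exact minSupp_mem (by rw [hsupp]; exact hxne)
    obtain ⟨r, _, hr⟩ := exists_of_mem_support_lc hmem
    have h1 := (ha r).lt_min
    have h2 := minSupp_le hr
    rw [hu] at h2
    exact h1.trans_le h2
  · rw [hT, iwNorm_smul P hinv, inv_mul_cancel₀ hxpos.ne']
  · rw [map_smul, smul_eq_mul, pow_succ, mul_comm]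
    exact mul_le_mul ((inv_le_inv₀ hθ hxpos).2 hlt.le) hbm (by positivity) hinv.le
  · rw [Finsupp.support_smul_eq hinv.ne', Nat.mul_succ]
    have hex : ∀ i ∈ b.support, ∃ r ∈ c.support, i ∈ (a r).support := fun i hi =>
      exists_of_mem_support_lc hi
    choose! φ hφ using hex
    have hsub : ∀ i ∈ b.support, (z i).support ⊆ (u (φ i)).support := by
      intro i hi
      rw [hu]
      exact hz.support_subset_lc (hφ i hi).2
    refine hc.sch.comp φ (fun i hi => (hφ i hi).1)
      (fun i hi => minSupp_mono (hz.1 i) (hsub i hi)) (fun i hi j hj hij => ?_) (fun r => ?_)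
    · by_contra hcon
      have h0 : φ j < φ i := by
        by_contra h
        exact hcon (hub.min_strictMono.monotone (not_lt.1 h))
      have h1 := hub.lt h0
      have h2 := minSupp_mono (hz.1 i) (hsub i hi)
      have h3 := maxSupp_mono (hz.1 j) (hsub j hj)
      have h4 := minSupp_le_maxSupp (z j)
      omega
    · refine (ha r).sch.subset fun i hi => ?_
      obtain ⟨hib, rfl⟩ := Finset.mem_filter.1 hi
      exact (hφ i hib).2

/-- The lower estimate bounds the mass of a large combination by `4 m_j` whenever `n k ≤ n_j`,
which contradicts the growth of `θ^{-n_j/n} / m_j` for suitable `j`. -/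
theorem exists_not_isLarge {P : IWParams} {z : ℕ → c00} (hpos : ∀ i, 1 ≤ minSupp (z i))
    (hlow : LowerEst P z) {n : ℕ} (hn : 1 ≤ n) {θ : ℝ} (hθ0 : 0 < θ) (hθ1 : θ < 1) :
    ∃ k, ∀ N a, ¬ IsLarge P z n θ k N a := by
  have hD1 : 1 < θ⁻¹ := (one_lt_inv₀ hθ0).2 hθ1
  have hD0 : 0 < θ⁻¹ := inv_pos.2 hθ0
  set β : ℝ := θ⁻¹ ^ ((n : ℝ)⁻¹) with hβ
  have hβn : β ^ n = θ⁻¹ := Real.rpow_inv_natCast_pow hD0.le (by omega)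
  have hβ1 : 1 < β := Real.one_lt_rpow hD1 (by positivity)
  obtain ⟨j, hj⟩ := ((P.growth_exp β hβ1).eventually_gt_atTop (4 * θ⁻¹)).exists
  have hm : (0 : ℝ) < P.m j := by
    have := P.two_le_m j
    positivity
  refine ⟨P.n j / n, fun N a ha => ?_⟩
  have h1 := hlow j a ha.nonneg (ha.sch.mono (fun i _ => hpos i) (Nat.mul_div_le _ _))
  rw [ha.norm_one, div_le_one (by positivity)] at h1
  have h2 : β ^ P.n j ≤ θ⁻¹ ^ (P.n j / n + 1) := by
    rw [← hβn, ← pow_mul]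
    refine pow_le_pow_right₀ hβ1.le ?_
    have := Nat.div_add_mod (P.n j) n
    have := Nat.mod_lt (P.n j) (show 0 < n by omega)
    rw [Nat.mul_succ]
    omega
  rw [lt_div_iff₀ hm] at hj
  have h3 := ha.mass_le
  rw [pow_succ] at h2
  have h4 : θ⁻¹ ^ (P.n j / n) * θ⁻¹ ≤ 4 * P.m j * θ⁻¹ :=
    mul_le_mul_of_nonneg_right (h3.trans h1) hD0.le
  linarith

/-- James' argument: below a sequence with the lower estimate there are normalized blocks with a
special convex combination of norm at least `θ`. -/
theorem exists_spec_norm_ge {P : IWParams} {z : ℕ → c00} (hz : IsNormBlockSeq (iwNorm P) z)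
    (hpos : ∀ i, 1 ≤ minSupp (z i)) (hlow : LowerEst P z) {n : ℕ} (hn : 1 ≤ n) {θ ε : ℝ}
    (hθ0 : 0 < θ) (hθ1 : θ < 1) (hε : 0 < ε) (N : ℕ) :
    ∃ (u : ℕ → c00) (c : ℕ →₀ ℝ), IsNormBlockSeq (iwNorm P) u ∧
      (∀ i, u i ∈ Submodule.span ℝ (Set.range z)) ∧ (∀ i, N < minSupp (u i)) ∧
      IsSpec (fun r => minSupp (u r)) (fun r => maxSupp (u r)) n ε c ∧
      θ ≤ iwNorm P (Finsupp.linearCombination ℝ u c) := by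
  by_contra hcon
  have hblk : IsBlk z := ⟨hz.1, hz.2.1⟩
  have hall : ∀ k M, ∃ a, IsLarge P z n θ k (max N M) a := by
    intro k
    induction k with
    | zero => exact fun M => exists_isLarge_zero hz n θ _
    | succ k ih =>
      intro M
      obtain ⟨a, ha, hu⟩ := exists_isLarge_seq (N := max N M) (fun M' => by
        obtain ⟨a, ha⟩ := ih M'
        exact ⟨a, ⟨ha.nonneg, lt_of_le_of_lt (le_max_right _ _) ha.lt_min, ha.norm_one,
          ha.mass_le, ha.sch⟩⟩)
      have hub : IsBlk fun r => Finsupp.linearCombination ℝ z (a r) := ⟨hu.1, hu.2.1⟩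
      obtain ⟨c, hc, -⟩ := exists_isSpec hub.min_strictMono hub.max_strictMono n ε hε 0
      refine isLarge_succ hblk hθ0 ha rfl hub hc ?_
      by_contra hge
      refine hcon ⟨_, c, hu, fun r => ?_, fun r => ?_, hc, not_lt.1 hge⟩
      · rw [Finsupp.mem_span_range_iff_exists_finsupp]
        exact ⟨a r, rfl⟩
      · exact lt_of_le_of_lt (le_max_left _ _) (ha r).lt_min
  obtain ⟨k, hk⟩ := exists_not_isLarge hpos hlow hn hθ0 hθ1
  obtain ⟨a, ha⟩ := hall k 0
  exact hk _ a ha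

/-! ### Functionals of small weight on special convex combinations -/

/-- A functional of weight `v` built from an `𝓢ₚ`-admissible sequence with `p < n` is at most
`1 / v + ε` on a special convex combination of normalized blocks: the blocks in whose range some
term of the sequence starts carry mass at most `ε`, and every other block meets at most one term. -/
theorem Decomp.abs_eval_spec_le {P : IWParams} {u : ℕ → c00} (hu : IsNormBlockSeq (iwNorm P) u)
    {f : c00} {v p : ℕ} {w : ℕ∞} (hf : WIW P f w) (D : Decomp P f v p) {n : ℕ} (hpn : p < n)
    {ε : ℝ} {t : ℕ → ℕ} {c : ℕ →₀ ℝ} (hc : IsSpec t (fun r => maxSupp (u r)) n ε c) :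
    |evalPair f (Finsupp.linearCombination ℝ u c)| ≤ 1 / v + ε := by
  classical
  have hub : IsBlk u := ⟨hu.1, hu.2.1⟩
  have hv0 : (0 : ℝ) < v := by
    have := D.two_le
    positivity
  let S : ℕ → ℕ → Prop := fun r q =>
    q < D.d ∧ minSupp (u r) < minSupp (D.F q) ∧ minSupp (D.F q) ≤ maxSupp (u r)
  let J : Finset ℕ := c.support.filter fun r => ∃ q, S r q
  have hJex : ∀ r ∈ J, ∃ q, S r q := fun r hr => (Finset.mem_filter.1 hr).2
  choose! φ hφ using hJex
  have hJ : Sch (fun r => maxSupp (u r)) p J := by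
    refine D.sch.spread φ (fun r hr => Finset.mem_range.2 (hφ r hr).1) (fun r hr => (hφ r hr).2.2)
      (fun r hr s hs hrs => ?_) (fun r hr s hs hrs => ?_)
    · have h1 := hφ r hr
      have h2 := hφ s hs
      rcases (hub.max_strictMono.le_iff_le.1 hrs).eq_or_lt with rfl | h
      · exact le_rfl
      · have h3 := hub.lt h
        have h4 := h1.2.2
        have h5 := h2.2.1
        omega
    · have h1 := hφ r hr
      have h2 := hφ s hs
      rw [← hrs] at h2
      by_contra hne
      rcases lt_or_gt_of_ne hne with h | h
      · have := hub.lt h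
        have := h1.2.2
        have := h2.2.1
        omega
      · have := hub.lt h
        have := h2.2.2
        have := h1.2.1
        omega
  have hJε : ∑ r ∈ J, c r ≤ ε := by
    obtain ⟨n, rfl⟩ : ∃ n', n = n' + 1 := ⟨n - 1, by omega⟩
    refine hc.small n rfl J (hJ.mono (fun r hr => ?_) (by omega))
    have := (hφ r hr).2
    omega
  have hbig : ∀ r, |evalPair f (u r)| ≤ 1 := fun r => (hf.abs_eval_le (u r)).trans_eq (hu.2.2 r)
  have hsmall : ∀ r, (¬ ∃ q, S r q) → |evalPair f (u r)| ≤ 1 / v := by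
    intro r hr
    rw [D.eval_eq, abs_mul, abs_of_pos (inv_pos.2 hv0), one_div]
    refine mul_le_of_le_one_right (inv_pos.2 hv0).le ?_
    by_cases hex : ∃ q < D.d, evalPair (D.F q) (u r) ≠ 0
    · obtain ⟨q, hq, hne⟩ := hex
      rw [Finset.sum_eq_single q]
      · exact ((D.mem q hq).abs_eval_le _).trans_eq (hu.2.2 r)
      · intro q' hq' hqq'
        have hqd : q' < D.d := Finset.mem_range.1 hq'
        by_contra hneg
        -- the later of two terms meeting the block would start inside its range
        have aux : ∀ q₁ q₂, q₁ < q₂ → q₂ < D.d → evalPair (D.F q₁) (u r) ≠ 0 →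
            evalPair (D.F q₂) (u r) ≠ 0 → False := by
          intro q₁ q₂ h12 h2 hn1 hn2
          obtain ⟨i₁, hi₁, hi₁'⟩ := exists_mem_of_evalPair_ne hn1
          obtain ⟨i₂, hi₂, hi₂'⟩ := exists_mem_of_evalPair_ne hn2
          refine hr ⟨q₂, h2, ?_, (minSupp_le hi₂).trans (le_maxSupp hi₂')⟩
          exact (minSupp_le hi₁').trans_lt ((le_maxSupp hi₁).trans_lt (D.block _ _ h12 h2))
        rcases lt_or_gt_of_ne hqq' with h | h
        · exact aux _ _ h hq hneg hne
        · exact aux _ _ h hqd hne hneg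
      · exact fun h => absurd (Finset.mem_range.2 hq) h
    · push Not at hex
      rw [Finset.sum_eq_zero fun q hq => hex q (Finset.mem_range.1 hq)]
      simp
  rw [evalPair_lc]
  refine (Finset.abs_sum_le_sum_abs _ _).trans ?_
  have hterm : ∀ r ∈ c.support, |c r * evalPair f (u r)| ≤
      c r * (1 / v) + if r ∈ J then c r else 0 := by
    intro r hr
    rw [abs_mul, abs_of_nonneg (hc.nonneg r)]
    by_cases hrJ : r ∈ J
    · rw [if_pos hrJ]
      have h1 := mul_le_mul_of_nonneg_left (hbig r) (hc.nonneg r)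
      have h2 : 0 ≤ c r * (1 / (v : ℝ)) := mul_nonneg (hc.nonneg r) (by positivity)
      linarith
    · rw [if_neg hrJ, add_zero]
      refine mul_le_mul_of_nonneg_left (hsmall r fun h => hrJ ?_) (hc.nonneg r)
      exact Finset.mem_filter.2 ⟨hr, h⟩
  refine (Finset.sum_le_sum hterm).trans ?_
  rw [Finset.sum_add_distrib, ← Finset.sum_mul, ← mass_eq, hc.mass_one, one_mul,
    ← Finset.sum_filter, Finset.filter_mem_eq_inter,
    Finset.inter_eq_right.2 (Finset.filter_subset _ _)]
  linarith

/-- The properties required of a single member of a rapidly increasing sequence. -/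
structure IsRISVector (P : IWParams) (y : ℕ → c00) (C : ℝ) (j : ℕ) (x : c00) : Prop where
  mem : x ∈ Submodule.span ℝ (Set.range y)
  ne : x.support.Nonempty
  one_le : 1 ≤ iwNorm P x
  le : iwNorm P x ≤ C
  eval : ∀ f w, WIW P f w → w < ((P.m j : ℕ) : ℕ∞) → |evalPair f x| ≤ C / (w.toNat : ℝ)

/-- With `C' = (1 + C) / 2`, the vector is `C'` times an `(n_{j+1}, ε)` special convex combination
of norm at least `1 / C'`, where `C' ε = (C - C') / m_{j+1}`. -/
theorem exists_isRISVector {P : IWParams} {y : ℕ → c00} (hy : IsNormBlockSeq (iwNorm P) y)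
    {C : ℝ} (hC : 1 < C) (j N : ℕ) : ∃ x, IsRISVector P y C (j + 1) x ∧ N < minSupp x := by
  have hblk : IsBlk y := ⟨hy.1, hy.2.1⟩
  have hsh : StrictMono fun i : ℕ => i + 1 := fun _ _ h => Nat.succ_lt_succ h
  have hy' : IsNormBlockSeq (iwNorm P) fun i => y (i + 1) :=
    ⟨(hblk.comp hsh).1, (hblk.comp hsh).2, fun i => hy.2.2 _⟩
  obtain ⟨σ, hσ, hlow⟩ := exists_lowerEst hy'
  have hzb : IsBlk fun i => y (σ i + 1) := (hblk.comp hsh).comp hσ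
  have hz : IsNormBlockSeq (iwNorm P) fun i => y (σ i + 1) := ⟨hzb.1, hzb.2, fun i => hy.2.2 _⟩
  have hpos : ∀ i, 1 ≤ minSupp (y (σ i + 1)) := fun i => by
    have := hblk.lt (Nat.succ_pos (σ i))
    exact (Nat.zero_le _).trans_lt this
  have hm : (0 : ℝ) < P.m (j + 1) := by
    have := P.two_le_m (j + 1)
    positivity
  set C' : ℝ := (1 + C) / 2 with hC'
  have h1C' : 1 < C' := by linarith
  have hC'C : C' < C := by linarith
  have h0C' : 0 < C' := by linarith
  obtain ⟨u, c, hu, hmem, hN, hc, hge⟩ := exists_spec_norm_ge hz hpos hlow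
    (n := P.n (j + 1)) (P.one_le_n _) (θ := C'⁻¹) (ε := (C - C') / (C' * P.m (j + 1)))
    (inv_pos.2 h0C') (inv_lt_one_of_one_lt₀ h1C')
    (div_pos (by linarith) (by positivity)) N
  have hub : IsBlk u := ⟨hu.1, hu.2.1⟩
  have hne : (Finsupp.linearCombination ℝ u c).support.Nonempty := by
    obtain ⟨r, hr⟩ := hc.nonempty
    exact (hub.1 r).mono (hub.support_subset_lc hr)
  have hsupp : (C' • Finsupp.linearCombination ℝ u c).support
      = (Finsupp.linearCombination ℝ u c).support := Finsupp.support_smul_eq h0C'.ne'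
  have hle1 : iwNorm P (Finsupp.linearCombination ℝ u c) ≤ 1 := by
    refine iwNorm_le fun f w hf => ?_
    rw [evalPair_lc, ← hc.mass_one, mass_eq]
    refine Finset.sum_le_sum fun r _ => mul_le_of_le_one_right (hc.nonneg r) ?_
    exact (hf.eval_le _).trans_eq (hu.2.2 r)
  refine ⟨C' • Finsupp.linearCombination ℝ u c, ⟨?_, ?_, ?_, ?_, ?_⟩, ?_⟩
  · refine Submodule.smul_mem _ _ ?_
    rw [Finsupp.linearCombination_apply, Finsupp.sum]
    refine Submodule.sum_mem _ fun r _ => Submodule.smul_mem _ _ ?_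
    refine Submodule.span_mono ?_ (hmem r)
    rintro _ ⟨i, rfl⟩
    exact ⟨_, rfl⟩
  · rw [hsupp]
    exact hne
  · rw [iwNorm_smul P h0C']
    rwa [inv_le_iff_one_le_mul₀ h0C', mul_comm] at hge
  · rw [iwNorm_smul P h0C']
    nlinarith
  · intro f w hf hw
    rcases hf.decomp with rfl | ⟨v, p, rfl, ⟨D⟩⟩
    · exact absurd hw (not_lt.2 le_top)
    have hvm : v < P.m (j + 1) := by exact_mod_cast hw
    have hv0 : (0 : ℝ) < v := by
      have := D.two_le
      positivity
    have hp : p + 1 < P.n (j + 1) := by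
      have := P.growth_sum D.l D.js j (fun i => by
        have h1 := P.m_le_prod D.js i
        rw [D.prod_eq] at h1
        exact Nat.lt_succ_iff.1 (P.m_mono.lt_iff_lt.1 (h1.trans_lt hvm))) (by
        rw [D.prod_eq]
        exact hvm.trans_le (Nat.le_self_pow two_ne_zero _))
      rwa [D.sum_eq] at this
    have h1 := D.abs_eval_spec_le hu hf (by omega) hc
    rw [evalPair_smul_right, abs_mul, abs_of_pos h0C', ENat.toNat_natCast]
    have h2 : C' * ((C - C') / (C' * P.m (j + 1))) ≤ (C - C') / v := by
      rw [← mul_div_assoc, mul_div_mul_left _ _ h0C'.ne']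
      exact div_le_div_of_nonneg_left (by linarith) hv0 (by exact_mod_cast hvm.le)
    calc C' * |evalPair f (Finsupp.linearCombination ℝ u c)|
        ≤ C' * (1 / v + (C - C') / (C' * P.m (j + 1))) :=
          mul_le_mul_of_nonneg_left h1 h0C'.le
      _ = C' / v + C' * ((C - C') / (C' * P.m (j + 1))) := by ring
      _ ≤ C' / v + (C - C') / v := by linarith
      _ = C / v := by ring
  · have hmin := minSupp_mem (x := C' • Finsupp.linearCombination ℝ u c) (by rwa [hsupp])
    rw [hsupp] at hmin
    obtain ⟨r, _, hr⟩ := exists_of_mem_support_lc hmin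
    have h2 := minSupp_le hr
    exact (hN r).trans_le h2

/-! ### Choosing the sequence -/

/-- For every block subspace `Y` of `X_iw` (spanned by the normalized
block sequence `y`) and every `C > 1` there is an infinite block sequence `(x_i)` in `Y`
and a strictly increasing `(j_i)` such that `(x_i)` is a `(C, (j_i))`-RIS with
`‖x_i‖ ≥ 1` for all `i`. -/
theorem statement11 (P : IWParams) (y : ℕ → c00) (hy : IsNormBlockSeq (iwNorm P) y)
    (C : ℝ) (hC : 1 < C) :
    ∃ (x : ℕ → c00) (j : ℕ → ℕ),
      (∀ i, x i ∈ Submodule.span ℝ (Set.range y)) ∧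
      IsRISNat P C j x ∧ ∀ i, 1 ≤ iwNorm P (x i) := by
  obtain ⟨s, hQ, hR⟩ := exists_chain
    (Q := fun s : c00 × ℕ => IsRISVector P y C s.2 s.1)
    (R := fun s s' => s.2 < s'.2 ∧ (maxSupp s.1 : ℝ) < Real.sqrt (P.m s'.2) ∧
      maxSupp s.1 < minSupp s'.1)
    (by
      obtain ⟨x, hx, -⟩ := exists_isRISVector hy hC 0 0
      exact ⟨(x, 1), hx⟩)
    (by
      rintro ⟨x, j⟩ -
      obtain ⟨x', hx', hlt⟩ := exists_isRISVector hy hC (max j (maxSupp x ^ 2)) (maxSupp x)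
      refine ⟨(x', max j (maxSupp x ^ 2) + 1), hx', ?_, ?_, hlt⟩
      · have := le_max_left j (maxSupp x ^ 2)
        exact Nat.lt_succ_of_le this
      · refine Real.lt_sqrt_of_sq_lt ?_
        have h1 : max j (maxSupp x ^ 2) + 1 ≤ P.m (max j (maxSupp x ^ 2) + 1) :=
          P.m_mono.le_apply
        have h2 := le_max_right j (maxSupp x ^ 2)
        exact_mod_cast (by omega : maxSupp x ^ 2 < P.m (max j (maxSupp x ^ 2) + 1)))
  exact ⟨fun i => (s i).1, fun i => (s i).2, fun i => (hQ i).mem,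
    ⟨strictMono_nat_of_lt_succ fun i => (hR i).1, fun i => (hQ i).ne, fun i => (hR i).2.2,
      fun i => (hQ i).le, fun i => (hR i).2.1, fun i => (hQ i).eval⟩, fun i => (hQ i).one_le⟩
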